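/- arXiv:1508.05293 — 2 statements merged into one kernel-verified Lean document; each statement's English description precedes it below -/
import Mathlib

section
/- For every positive integer n, the number of nonnegative integer solutions (x_0, x_1, ..., x_n) to x_0 + x_1 + ... + x_n = b equals binomial(n+b, b), and hence the number of (n+1, b)-cores for gcd(n+1,b)=1 equals (1/(n+1)) * binomial(n+b, b). -/
/-- The hook length of the cell `(i, j)` in a Young diagram. -/
def YoungDiagram.hookLength (μ : YoungDiagram) (i j : ℕ) : ℕ :=
  (μ.rowLen i - j) + (μ.colLen j - i) - 1

/-- A Young diagram is an `a`-core if none of its hook lengths is divisible by `a`. -/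
def YoungDiagram.IsCore (μ : YoungDiagram) (a : ℕ) : Prop :=
  ∀ i j : ℕ, (i, j) ∈ μ → ¬ a ∣ μ.hookLength i j

namespace CoreCount

open YoungDiagram

/-- The increasing sequence of gaps of the first-column hook set. -/
def gap (μ : YoungDiagram) (j : ℕ) : ℕ := j + (μ.colLen 0 - μ.colLen j)

lemma gap_add (μ : YoungDiagram) (j : ℕ) : gap μ j + μ.colLen j = j + μ.colLen 0 := by
  have := μ.colLen_anti 0 j (Nat.zero_le _)
  unfold gap; omega

lemma gap_strictMono (μ : YoungDiagram) : StrictMono (gap μ) := by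
  refine strictMono_nat_of_lt_succ fun j => ?_
  have h1 := gap_add μ j
  have h2 := gap_add μ (j + 1)
  have := μ.colLen_anti j (j + 1) (Nat.le_succ _)
  omega

lemma gap_zero (μ : YoungDiagram) : gap μ 0 = 0 := by simp [gap]

lemma mem_iff_row_col (μ : YoungDiagram) (i j : ℕ) : j < μ.rowLen i ↔ i < μ.colLen j := by
  rw [← mem_iff_lt_rowLen, mem_iff_lt_colLen]

lemma hook_eq (μ : YoungDiagram) (i j : ℕ) (h : (i, j) ∈ μ) :
    gap μ j + μ.hookLength i j + i + 1 = μ.rowLen i + μ.colLen 0 ∧ 0 < μ.hookLength i j := by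
  have h1 := mem_iff_lt_rowLen.1 h
  have h2 := mem_iff_lt_colLen.1 h
  have h3 := gap_add μ j
  unfold YoungDiagram.hookLength
  omega

lemma gap_ne (μ : YoungDiagram) (i j : ℕ) :
    gap μ j + i + 1 ≠ μ.rowLen i + μ.colLen 0 := by
  intro h
  have h3 := gap_add μ j
  have := mem_iff_row_col μ i j
  omega

lemma exists_row (μ : YoungDiagram) (v : ℕ) (hv : v ∉ Set.range (gap μ)) :
    ∃ i, i < μ.colLen 0 ∧ v + i + 1 = μ.rowLen i + μ.colLen 0 := by
  have hex : ∃ j, v < gap μ j := ⟨v + 1, lt_of_lt_of_le (Nat.lt_succ_self v)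
    ((gap_strictMono μ).id_le (v + 1))⟩
  classical
  obtain ⟨j, hj, hmin⟩ : ∃ j, v < gap μ j ∧ ∀ k < j, ¬ v < gap μ k :=
    ⟨Nat.find hex, Nat.find_spec hex, fun k hk => Nat.find_min hex hk⟩
  obtain _ | j := j
  · rw [gap_zero] at hj; omega
  have h1 := hmin j (Nat.lt_succ_self j)
  have h2 : gap μ j ≠ v := fun h => hv ⟨j, h⟩
  have h3 := gap_add μ j
  have h4 := gap_add μ (j + 1)
  have h5 := μ.colLen_anti 0 j (Nat.zero_le _)
  refine ⟨j + μ.colLen 0 - v, ?_, ?_⟩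
  · omega
  · have e1 := mem_iff_row_col μ (j + μ.colLen 0 - v) j
    have e2 := mem_iff_row_col μ (j + μ.colLen 0 - v) (j + 1)
    omega

lemma isCore_iff (μ : YoungDiagram) (a : ℕ) (ha : 0 < a) :
    μ.IsCore a ↔ ∀ t ∈ Set.range (gap μ), t + a ∈ Set.range (gap μ) := by
  constructor
  · rintro h _ ⟨j, rfl⟩
    by_contra hc
    obtain ⟨i, hi, he⟩ := exists_row μ _ hc
    have h3 := gap_add μ j
    have h4 := mem_iff_row_col μ i j
    have hm : (i, j) ∈ μ := by
      rw [mem_iff_lt_rowLen]; omega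
    have := hook_eq μ i j hm
    apply h i j hm
    have : μ.hookLength i j = a := by omega
    rw [this]
  · rintro h i j hm ⟨k, hk⟩
    have hh := hook_eq μ i j hm
    have key : ∀ k, gap μ j + a * k ∈ Set.range (gap μ) := by
      intro k
      induction k with
      | zero => exact ⟨j, by simp⟩
      | succ k ih => have := h _ ih; rwa [add_assoc, ← Nat.mul_succ] at this
    obtain ⟨j', hj'⟩ := key k
    apply gap_ne μ i j'
    rw [hj', ← hk]; exact hh.1

lemma colLen_eventually (μ : YoungDiagram) (j : ℕ) (hj : μ.rowLen 0 ≤ j) : μ.colLen j = 0 := by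
  have := mem_iff_row_col μ 0 j
  omega

lemma gap_range_inj {μ ν : YoungDiagram} (h : Set.range (gap μ) = Set.range (gap ν)) : μ = ν := by
  have hg : gap μ = gap ν := ((gap_strictMono μ).range_inj (gap_strictMono ν)).1 h
  have e : ∀ j, gap μ j = gap ν j := fun j => congrFun hg j
  have h0 : μ.colLen 0 = ν.colLen 0 := by
    let J := μ.rowLen 0 + ν.rowLen 0
    have h1 := gap_add μ J
    have h2 := gap_add ν J
    have h3 := colLen_eventually μ J (Nat.le_add_right _ _)
    have h4 := colLen_eventually ν J (Nat.le_add_left _ _)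
    have := e J
    omega
  apply SetLike.ext
  rintro ⟨i, j⟩
  rw [mem_iff_lt_colLen, mem_iff_lt_colLen]
  have h1 := gap_add μ j
  have h2 := gap_add ν j
  have := e j
  omega

lemma exists_diagram (T : Set ℕ) (h0 : 0 ∈ T) (N : ℕ) (hN : ∀ t, N ≤ t → t ∈ T) :
    ∃ μ : YoungDiagram, Set.range (gap μ) = T := by
  classical
  have hinf : (Set.ofPred (· ∈ T)).Infinite := by
    refine Set.infinite_of_not_bddAbove ?_
    rintro ⟨B, hB⟩
    have : N + B + 1 ≤ B := hB (hN (N + B + 1) (by omega))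
    omega
  obtain ⟨t, hmono, hran⟩ : ∃ t : ℕ → ℕ, StrictMono t ∧ Set.range t = T :=
    ⟨Nat.nth (· ∈ T), Nat.nth_strictMono hinf, Nat.range_nth_of_infinite hinf⟩
  have t0 : t 0 = 0 := by
    rw [← hran] at h0
    obtain ⟨k, hk⟩ := h0
    have := hmono.monotone (Nat.zero_le k)
    omega
  have hb : ∀ j, t j ≤ N + j := by
    intro j
    induction j with
    | zero => omega
    | succ j ih =>
      have hm : max N (t j + 1) ∈ T := hN _ (le_max_left _ _)
      rw [← hran] at hm
      obtain ⟨k, hk⟩ := hm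
      have : j < k := hmono.lt_iff_lt.1 (by omega)
      have := hmono.monotone (Nat.succ_le_of_lt this)
      have : t (j + 1) ≤ t k := this
      omega
  have hstep : ∀ i j, i ≤ j → t i + j ≤ t j + i := by
    intro i j hij
    induction j, hij using Nat.le_induction with
    | base => exact le_rfl
    | succ j hij ih =>
      have := hmono (Nat.lt_succ_self j)
      have : t j < t (j + 1) := this
      omega
  have hge : ∀ j, j ≤ t j := fun j => by have := hstep 0 j (Nat.zero_le _); omega
  let s : Set ℕ := Set.range fun j => t j - j
  have hbs : BddAbove s := ⟨N, by rintro _ ⟨j, rfl⟩; have := hb j; simp only; omega⟩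
  obtain ⟨L, ⟨j0, hj0⟩, hL⟩ : ∃ L, (∃ j0, t j0 = j0 + L) ∧ ∀ j, t j ≤ j + L := by
    refine ⟨sSup s, ?_, ?_⟩
    · obtain ⟨j0, hj0⟩ := Nat.sSup_mem (s := s) ⟨_, ⟨0, rfl⟩⟩ hbs
      refine ⟨j0, ?_⟩
      have := hge j0
      simp only at hj0
      omega
    · intro j
      have : t j - j ≤ sSup s := le_csSup hbs ⟨j, rfl⟩
      omega
  let μ : YoungDiagram :=
    { cells := (Finset.range L ×ˢ Finset.range j0).filter fun c => t c.2 + c.1 < L + c.2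
      isLowerSet := by
        rintro ⟨i, j⟩ ⟨i', j'⟩ ⟨hi, hj⟩ hm
        simp only [Finset.coe_filter, Finset.mem_product, Finset.mem_range,
          Set.mem_ofPred_eq] at hm ⊢
        simp only at hi hj
        have := hstep j' j hj
        omega }
  have hmem : ∀ i j, (i, j) ∈ μ ↔ t j + i < L + j := by
    intro i j
    change (i, j) ∈ (Finset.range L ×ˢ Finset.range j0).filter _ ↔ _
    simp only [Finset.mem_filter, Finset.mem_product, Finset.mem_range]
    constructor
    · exact fun h => h.2
    · intro h
      have := hge j
      refine ⟨⟨by omega, ?_⟩, h⟩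
      by_contra hc
      have := hstep j0 j (by omega)
      omega
  have hcol : ∀ j, μ.colLen j + t j = L + j := by
    intro j
    have h1 := hmem (μ.colLen j) j
    have h2 := hmem (L + j - t j) j
    rw [mem_iff_lt_colLen] at h1 h2
    have := hL j
    omega
  refine ⟨μ, ?_⟩
  rw [← hran]
  congr 1
  funext j
  have h1 := gap_add μ j
  have h2 := hcol j
  have h3 := hcol 0
  omega

/-- Sets of naturals containing `0` and closed under adding `a` and `b`. -/
def Mods (a b : ℕ) : Set (Set ℕ) :=
  {T | 0 ∈ T ∧ (∀ t ∈ T, t + a ∈ T) ∧ ∀ t ∈ T, t + b ∈ T}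

lemma add_mul_mem {T : Set ℕ} {a : ℕ} (h : ∀ t ∈ T, t + a ∈ T) {t : ℕ} (ht : t ∈ T) (k : ℕ) :
    t + k * a ∈ T := by
  induction k with
  | zero => simpa using ht
  | succ k ih => have := h _ ih; rwa [add_assoc, ← Nat.succ_mul] at this

lemma exists_mem_residue {a b : ℕ} [NeZero a] (hab : Nat.Coprime a b) {T : Set ℕ}
    (hT : T ∈ Mods a b) (r : ZMod a) : ∃ t ∈ T, (t : ZMod a) = r := by
  refine ⟨0 + (r * (b : ZMod a)⁻¹).val * b, add_mul_mem hT.2.2 hT.1 _, ?_⟩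
  push_cast
  rw [ZMod.natCast_zmod_val, mul_assoc, mul_comm _ (b : ZMod a),
    ZMod.coe_mul_inv_eq_one b hab.symm]
  simp

/-- The least element of `T` in a residue class. -/
noncomputable def low (a : ℕ) (T : Set ℕ) (r : ZMod a) : ℕ := sInf {t | t ∈ T ∧ (t : ZMod a) = r}

lemma low_spec {a b : ℕ} [NeZero a] (hab : Nat.Coprime a b) {T : Set ℕ} (hT : T ∈ Mods a b)
    (r : ZMod a) : low a T r ∈ T ∧ ((low a T r : ℕ) : ZMod a) = r :=
  Nat.sInf_mem (s := {t | t ∈ T ∧ (t : ZMod a) = r}) (exists_mem_residue hab hT r)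

lemma low_le {a : ℕ} {T : Set ℕ} {t : ℕ} (ht : t ∈ T) : low a T (t : ZMod a) ≤ t := Nat.sInf_le ⟨ht, rfl⟩

lemma low_zero {a b : ℕ} {T : Set ℕ} (hT : T ∈ Mods a b) : low a T 0 = 0 := by
  have := low_le (a := a) hT.1
  simpa using this

lemma mem_iff_low {a b : ℕ} [NeZero a] (hab : Nat.Coprime a b) {T : Set ℕ} (hT : T ∈ Mods a b)
    {t : ℕ} : t ∈ T ↔ low a T (t : ZMod a) ≤ t := by
  refine ⟨low_le, fun h => ?_⟩
  obtain ⟨h1, h2⟩ := low_spec hab hT (t : ZMod a)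
  have h3 := (ZMod.natCast_eq_natCast_iff _ _ _).1 h2
  obtain ⟨k, hk⟩ := (Nat.modEq_iff_dvd' h).1 h3
  have : t = low a T (t : ZMod a) + k * a := by rw [mul_comm k a, ← hk]; omega
  rw [this]
  exact add_mul_mem hT.2.1 h1 k

lemma low_add {a b : ℕ} [NeZero a] (hab : Nat.Coprime a b) {T : Set ℕ} (hT : T ∈ Mods a b)
    (r : ZMod a) : low a T (r + b) ≤ low a T r + b := by
  obtain ⟨h1, h2⟩ := low_spec hab hT r
  have := low_le (a := a) (hT.2.2 _ h1)
  push_cast at this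
  rwa [h2] at this

lemma cofinite {a b : ℕ} [NeZero a] (hab : Nat.Coprime a b) {T : Set ℕ} (hT : T ∈ Mods a b)
    : ∃ N, ∀ t, N ≤ t → t ∈ T := by
  refine ⟨∑ r : ZMod a, low a T r, fun t ht => (mem_iff_low hab hT).2 (le_trans ?_ ht)⟩
  exact Finset.single_le_sum (f := fun r : ZMod a => low a T r) (fun _ _ => Nat.zero_le _)
    (Finset.mem_univ _)

/-- The steps. -/
lemma step_spec {a b : ℕ} [NeZero a] (hab : Nat.Coprime a b) {T : Set ℕ} (hT : T ∈ Mods a b)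
    (r : ZMod a) : ∃ x : ℕ, low a T r + b = low a T (r + b) + a * x := by
  have h := low_add hab hT r
  have h3 : low a T (r + b) ≡ low a T r + b [MOD a] := by
    rw [← ZMod.natCast_eq_natCast_iff]
    push_cast
    rw [(low_spec hab hT _).2, (low_spec hab hT _).2]
  obtain ⟨k, hk⟩ := (Nat.modEq_iff_dvd' h).1 h3
  exact ⟨k, by omega⟩

lemma const_of_inv {a b : ℕ} [NeZero a] (hab : Nat.Coprime a b) (f : ZMod a → ℤ)
    (h : ∀ r, f (r + b) = f r) (r : ZMod a) : f r = f 0 := by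
  have key : ∀ k : ℕ, f (k * b) = f 0 := by
    intro k
    induction k with
    | zero => simp
    | succ k ih => rw [← ih, ← h (k * b)]; congr 1; push_cast; ring
  have := key (r * (b : ZMod a)⁻¹).val
  rw [ZMod.natCast_zmod_val, mul_assoc, mul_comm _ (b : ZMod a),
    ZMod.coe_mul_inv_eq_one b hab.symm, mul_one] at this
  exact this

/-- Every composition comes from an integer-valued function on residues. -/
lemma exists_fun {a b : ℕ} [NeZero a] (hab : Nat.Coprime a b) (x : ZMod a → ℕ)
    (hx : ∑ i, x i = b) : ∃ M : ZMod a → ℤ, (∀ r, ((M r : ℤ) : ZMod a) = r) ∧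
      ∀ r, M r + b = M (r + b) + a * x r := by
  have hub := ZMod.coe_mul_inv_eq_one b hab.symm
  let g : ZMod a → ℤ := fun i => (b : ℤ) - a * x (i * b)
  let F : ℕ → ℤ := fun k => ∑ i ∈ Finset.range k, g (i : ZMod a)
  have hF0 : F 0 = 0 := by simp [F]
  have hFs : ∀ k, F (k + 1) = F k + g (k : ZMod a) := fun k => Finset.sum_range_succ _ _
  have hFa : F a = 0 := by
    have h1 : F a = ∑ i : ZMod a, g i := by
      refine Finset.sum_bij' (fun i _ => (i : ZMod a)) (fun i _ => i.val) ?_ ?_ ?_ ?_ ?_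
      · simp
      · intro i _; simpa using ZMod.val_lt i
      · intro i hi; exact ZMod.val_cast_of_lt (by simpa using hi)
      · intro i _; simp
      · simp
    have h2 : ∑ i : ZMod a, x (i * b) = ∑ i, x i := by
      let e : ZMod a ≃ ZMod a :=
        { toFun := fun i => i * b
          invFun := fun i => i * (b : ZMod a)⁻¹
          left_inv := fun i => by simp only [mul_assoc, hub, mul_one]
          right_inv := fun i => by
            simp only
            rw [mul_assoc, mul_comm _ (b : ZMod a), hub, mul_one] }
      exact e.sum_comp x
    rw [h1]
    simp only [g, Finset.sum_sub_distrib, ← Finset.mul_sum]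
    have h3 : ∑ i : ZMod a, (x (i * b) : ℤ) = b := by exact_mod_cast h2.trans hx
    rw [h3]
    simp [ZMod.card]
  have hcast : ∀ k : ℕ, ((F k : ℤ) : ZMod a) = k * b := by
    intro k
    induction k with
    | zero => simp [hF0]
    | succ k ih => rw [hFs]; push_cast; rw [ih]; simp [g]; ring
  refine ⟨fun r => F (r * (b : ZMod a)⁻¹).val, fun r => ?_, fun r => ?_⟩
  · rw [hcast, ZMod.natCast_zmod_val, mul_assoc, mul_comm _ (b : ZMod a), hub, mul_one]
  · have e : (r + b) * (b : ZMod a)⁻¹ = r * (b : ZMod a)⁻¹ + 1 := by rw [add_mul, hub]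
    have e2 : r * (b : ZMod a)⁻¹ * b = r := by
      rw [mul_assoc, mul_comm _ (b : ZMod a), hub, mul_one]
    simp only [e]
    generalize r * (b : ZMod a)⁻¹ = q at *
    have hs := hFs q.val
    simp only [g, ZMod.natCast_zmod_val, e2] at hs
    have hw : F (q + 1).val = F (q.val + 1) := by
      have h1 : (q + 1) = ((q.val + 1 : ℕ) : ZMod a) := by simp
      rw [h1, ZMod.val_natCast]
      have hq := ZMod.val_lt q
      rcases Nat.lt_or_ge (q.val + 1) a with h | h
      · rw [Nat.mod_eq_of_lt h]
      · have : q.val + 1 = a := by omega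
        rw [this, Nat.mod_self, hF0, hFa]
    rw [hw, hs]; ring

lemma card_mul {a b : ℕ} [NeZero a] (hab : Nat.Coprime a b) :
    Nat.card (Mods a b) * a = Nat.card {x : ZMod a → ℕ // ∑ i, x i = b} := by
  have ha : 0 < a := Nat.pos_of_ne_zero (NeZero.ne a)
  choose x hx using fun (T : Mods a b) (r : ZMod a) => step_spec hab T.2 r
  have hsum : ∀ T, ∑ r, x T r = b := by
    intro T
    have h1 : ∑ r, (low a T.1 r + b) = ∑ r, (low a T.1 (r + b) + a * x T r) :=
      Finset.sum_congr rfl fun r _ => hx T r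
    have h2 : ∑ r : ZMod a, low a T.1 (r + b) = ∑ r : ZMod a, low a T.1 r :=
      Equiv.sum_comp (Equiv.addRight (b : ZMod a)) (fun r => low a T.1 r)
    rw [Finset.sum_add_distrib, Finset.sum_add_distrib, h2, ← Finset.mul_sum] at h1
    simp only [Finset.sum_const, Finset.card_univ, ZMod.card, smul_eq_mul] at h1
    exact (Nat.eq_of_mul_eq_mul_left ha (by omega)).symm
  let Φ : Mods a b × ZMod a → {x : ZMod a → ℕ // ∑ i, x i = b} := fun p =>
    ⟨fun r => x p.1 (r - p.2), by
      exact (Equiv.sum_comp (Equiv.subRight p.2) (fun r => x p.1 r)).trans (hsum _)⟩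
  have hinj : Function.Injective Φ := by
    rintro ⟨T, j⟩ ⟨T', j'⟩ h
    have hxx : ∀ r, x T (r - j) = x T' (r - j') := fun r => congrFun (congrArg Subtype.val h) r
    let f : ZMod a → ℤ := fun r => (low a T.1 (r - j) : ℤ) - low a T'.1 (r - j')
    have hf : ∀ r, f (r + b) = f r := by
      intro r
      have h1 := hx T (r - j)
      have h2 := hx T' (r - j')
      rw [hxx, sub_add_eq_add_sub] at h1
      rw [sub_add_eq_add_sub] at h2
      simp only [f]
      omega
    have hc := const_of_inv hab f hf
    have hj : f j ≤ 0 := by simp [f, low_zero T.2]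
    have hj' : 0 ≤ f j' := by simp [f, low_zero T'.2]
    have hz : f 0 = 0 := by rw [hc] at hj hj'; omega
    have hz' : ∀ r, low a T.1 (r - j) = low a T'.1 (r - j') := by
      intro r
      have := hc r
      rw [hz] at this
      simp only [f] at this
      omega
    have hjj : j = j' := by
      have h1 := hz' j
      rw [sub_self, low_zero T.2] at h1
      have h2 := (low_spec hab T'.2 (j - j')).2
      rw [← h1] at h2
      exact sub_eq_zero.1 (by simpa using h2.symm)
    subst hjj
    have : T = T' := by
      apply Subtype.ext
      ext t
      rw [mem_iff_low hab T.2, mem_iff_low hab T'.2]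
      have := hz' (t + j)
      rw [add_sub_cancel_right] at this
      rw [this]
    rw [this]
  have hsurj : Function.Surjective Φ := by
    rintro ⟨y, hy⟩
    obtain ⟨M, hM1, hM2⟩ := exists_fun hab y hy
    obtain ⟨r0, hr0⟩ := Finite.exists_min M
    let m : ZMod a → ℤ := fun r => M (r + r0) - M r0
    have hm0 : m 0 = 0 := by simp [m]
    have hmn : ∀ r, 0 ≤ m r := fun r => by have := hr0 (r + r0); simp only [m]; omega
    have hmc : ∀ r, ((m r : ℤ) : ZMod a) = r := by
      intro r; simp only [m]; push_cast; rw [hM1, hM1]; ring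
    have hmb : ∀ r, m r + b = m (r + b) + a * y (r + r0) := by
      intro r
      have := hM2 (r + r0)
      rw [add_right_comm] at this
      simp only [m]
      linarith
    let T : Set ℕ := {t | m (t : ZMod a) ≤ t}
    have hT : T ∈ Mods a b := by
      refine ⟨by simp [T, hm0], fun t ht => ?_, fun t ht => ?_⟩
      · simp only [T, Set.mem_ofPred_eq] at ht ⊢
        push_cast
        rw [ZMod.natCast_self, add_zero]
        omega
      · simp only [T, Set.mem_ofPred_eq] at ht ⊢
        have := hmb t
        push_cast
        have h2 : (0 : ℤ) ≤ a * y (t + r0) := by positivity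
        omega
    have hlow : ∀ r, (low a T r : ℤ) = m r := by
      intro r
      obtain ⟨h1, h2⟩ := low_spec hab hT r
      have h3 : m r ≤ low a T r := by
        have : m ((low a T r : ℕ) : ZMod a) ≤ (low a T r : ℕ) := h1
        rwa [h2] at this
      have h4 : low a T r ≤ (m r).toNat := by
        have e : (((m r).toNat : ℕ) : ZMod a) = r := by
          conv_rhs => rw [← hmc r]
          rw [← Int.cast_natCast, Int.toNat_of_nonneg (hmn r)]
        have : (m r).toNat ∈ T := by
          simp only [T, Set.mem_ofPred_eq]
          rw [e]; exact Int.self_le_toNat _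
        have := low_le (a := a) this
        rwa [e] at this
      have := hmn r
      omega
    refine ⟨(⟨T, hT⟩, r0), ?_⟩
    apply Subtype.ext
    funext r
    change x ⟨T, hT⟩ (r - r0) = y r
    have h1 := hx ⟨T, hT⟩ (r - r0)
    have h2 := hmb (r - r0)
    rw [sub_add_cancel, ← hlow, ← hlow] at h2
    simp only at h1
    have h3 : a * x ⟨T, hT⟩ (r - r0) = a * y r := by
      zify at h1 ⊢
      linarith
    exact Nat.eq_of_mul_eq_mul_left ha h3
  rw [← Nat.card_eq_of_bijective Φ ⟨hinj, hsurj⟩, Nat.card_prod, Nat.card_zmod]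

lemma card_cores {a b : ℕ} [NeZero a] (hb : 0 < b) (hab : Nat.Coprime a b) :
    Nat.card {μ : YoungDiagram | μ.IsCore a ∧ μ.IsCore b} = Nat.card (Mods a b) := by
  have ha : 0 < a := Nat.pos_of_ne_zero (NeZero.ne a)
  let Φ : {μ : YoungDiagram | μ.IsCore a ∧ μ.IsCore b} → Mods a b := fun μ =>
    ⟨Set.range (gap μ.1), ⟨0, gap_zero _⟩, (isCore_iff _ _ ha).1 μ.2.1,
      (isCore_iff _ _ hb).1 μ.2.2⟩
  refine Nat.card_eq_of_bijective Φ ⟨?_, ?_⟩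
  · intro μ ν h
    exact Subtype.ext (gap_range_inj (congrArg Subtype.val h))
  · rintro ⟨T, hT⟩
    obtain ⟨N, hN⟩ := cofinite hab hT
    obtain ⟨μ, hμ⟩ := exists_diagram T hT.1 N hN
    refine ⟨⟨μ, (isCore_iff _ _ ha).2 ?_, (isCore_iff _ _ hb).2 ?_⟩, Subtype.ext hμ⟩
    · rw [hμ]; exact hT.2.1
    · rw [hμ]; exact hT.2.2

lemma card_sols (n b : ℕ) :
    Nat.card {x : Fin (n + 1) → ℕ // ∑ i, x i = b} = (n + b).choose b := by
  rw [← Nat.card_congr (Sym.equivNatSumOfFintype (Fin (n + 1)) b), Nat.card_eq_fintype_card,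
    Sym.card_sym_eq_choose, Fintype.card_fin]
  congr 1
  omega

end CoreCount

/-- The number of nonnegative integer solutions of `x_0 + ⋯ + x_n = b` is
`(n+b).choose b`, and hence the number of `(n+1, b)`-cores for `gcd(n+1,b) = 1`
equals `(1/(n+1)) * (n+b).choose b`. -/
theorem card_solutions_and_cores (n b : ℕ) (hn : 0 < n) :
    Nat.card {x : Fin (n + 1) → ℕ // ∑ i, x i = b} = (n + b).choose b ∧
    (Nat.Coprime (n + 1) b →
      Nat.card {μ : YoungDiagram | μ.IsCore (n + 1) ∧ μ.IsCore b}
        = (n + b).choose b / (n + 1)) := by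
  refine ⟨CoreCount.card_sols n b, fun hab => ?_⟩
  have hb : 0 < b := by
    rcases Nat.eq_zero_or_pos b with rfl | h
    · simp at hab; omega
    · exact h
  rw [CoreCount.card_cores hb hab, ← CoreCount.card_sols n b]
  have h : Nat.card (CoreCount.Mods (n + 1) b) * (n + 1) =
      Nat.card {x : Fin (n + 1) → ℕ // ∑ i, x i = b} := CoreCount.card_mul hab
  rw [← h, Nat.mul_div_cancel _ (Nat.succ_pos n)]
end

section
/- For n >= 1 and coprime h = n+1 and b, let mu = n(b-1)(n+b+2)/24 be the mean size. Then the sum over all (n+1, b)-cores lambda of (size(lambda) - mu)^2 equals (1/(n+1)) * binomial(n+b, b) * (n+1)(n)b(b-1)(n+1+b)(n+b+2)/1440. -/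
namespace SMC
def beta (μ : YoungDiagram) (i : ℕ) : ℕ := μ.rowLen i + (μ.colLen 0 - 1 - i)
def bset (μ : YoungDiagram) : Finset ℕ := (Finset.range (μ.colLen 0)).image (beta μ)

lemma lt_iff (μ : YoungDiagram) (i j : ℕ) : i < μ.colLen j ↔ j < μ.rowLen i := by
  rw [← YoungDiagram.mem_iff_lt_colLen, YoungDiagram.mem_iff_lt_rowLen]

lemma beta_lt (μ : YoungDiagram) {i k : ℕ} (h : i < k) (hk : k < μ.colLen 0) :
    beta μ k < beta μ i := by
  have := μ.rowLen_anti i k h.le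
  unfold beta; omega

lemma not_mem_bset (μ : YoungDiagram) (j : ℕ) : μ.colLen 0 + j - μ.colLen j ∉ bset μ := by
  intro h
  simp only [bset, Finset.mem_image, Finset.mem_range] at h
  obtain ⟨k, hk, h⟩ := h
  have h1 := lt_iff μ k j
  have h2 := μ.colLen_anti 0 j (Nat.zero_le _)
  unfold beta at h
  by_cases h3 : k < μ.colLen j
  · have := h1.1 h3; omega
  · have : ¬ j < μ.rowLen k := fun h => h3 (h1.2 h)
    omega

lemma exists_col (μ : YoungDiagram) (t : ℕ) (ht : t ∉ bset μ) :
    ∃ j, t = μ.colLen 0 + j - μ.colLen j := by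
  have hle := fun j => μ.colLen_anti 0 j (Nat.zero_le _)
  let P : ℕ → Prop := fun j => t < μ.colLen 0 + j - μ.colLen j
  have hex : ∃ j, P j := ⟨t + 1, by have := hle (t+1); show t < _; omega⟩
  classical
  have h1 := Nat.find_spec hex
  have h2 : Nat.find hex ≠ 0 := by
    intro h; rw [h] at h1; simp [P] at h1
  obtain ⟨j, hj⟩ := Nat.exists_eq_succ_of_ne_zero h2
  have h3 := Nat.find_min hex (m := j) (by omega)
  rw [hj] at h1
  simp only [P] at h1 h3
  refine ⟨j, ?_⟩
  by_contra hne
  apply ht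
  have hj0 := hle j
  have hj1 := hle (j+1)
  have hjj := μ.colLen_anti j (j+1) (by omega)
  rw [Nat.succ_eq_add_one] at h1
  have e1 := lt_iff μ (μ.colLen 0 + j - t) j
  have e2 := lt_iff μ (μ.colLen 0 + j - t) (j+1)
  have f1 := e1.1 (by omega)
  have f2 : ¬ (j + 1 < μ.rowLen (μ.colLen 0 + j - t)) := fun h => by have := e2.2 h; omega
  simp only [bset, Finset.mem_image, Finset.mem_range]
  refine ⟨μ.colLen 0 + j - t, by omega, ?_⟩
  unfold beta; omega

/-- Closed under subtraction of `a`. -/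
def Cl (a : ℕ) (X : Finset ℕ) : Prop := ∀ x ∈ X, a ≤ x → x - a ∈ X

lemma Cl.mul {a : ℕ} {X : Finset ℕ} (h : Cl a X) (m : ℕ) (x : ℕ) (hx : x ∈ X)
    (hm : a * m ≤ x) : x - a * m ∈ X := by
  induction m with
  | zero => simpa using hx
  | succ m ih =>
    rw [Nat.mul_succ] at *
    have h1 := ih (by omega)
    have := h _ h1 (by omega)
    rwa [Nat.sub_sub] at this

lemma isCore_iff (μ : YoungDiagram) (a : ℕ) (ha : 0 < a) : μ.IsCore a ↔ Cl a (bset μ) := by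
  constructor
  · intro h x hx hax
    by_contra hn
    obtain ⟨j, hj⟩ := exists_col μ _ hn
    simp only [bset, Finset.mem_image, Finset.mem_range] at hx
    obtain ⟨i, hi, rfl⟩ := hx
    have hle := μ.colLen_anti 0 j (Nat.zero_le _)
    have hij : i < μ.colLen j := by
      by_contra hc
      have h2 : ¬ j < μ.rowLen i := fun h => hc ((lt_iff μ i j).2 h)
      unfold beta at *; omega
    have hij' := (lt_iff μ i j).1 hij
    apply h i j (YoungDiagram.mem_iff_lt_colLen.2 hij)
    have : μ.hookLength i j = a := by
      unfold YoungDiagram.hookLength; unfold beta at *; omega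
    rw [this]
  · intro h i j hij hd
    obtain ⟨m, hm⟩ := hd
    have h1 := YoungDiagram.mem_iff_lt_colLen.1 hij
    have h2 := YoungDiagram.mem_iff_lt_rowLen.1 hij
    have hle := μ.colLen_anti 0 j (Nat.zero_le _)
    unfold YoungDiagram.hookLength at hm
    have hb : beta μ i ∈ bset μ :=
      Finset.mem_image_of_mem _ (Finset.mem_range.2 (by omega))
    have h3 := h.mul m _ hb (by unfold beta; omega)
    apply not_mem_bset μ j
    convert h3 using 1
    unfold beta; omega

lemma beta_inj (μ : YoungDiagram) : Set.InjOn (beta μ) (Finset.range (μ.colLen 0)) := by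
  intro i hi k hk h
  simp only [Finset.coe_range, Set.mem_Iio] at hi hk
  rcases lt_trichotomy i k with h1 | h1 | h1
  · have := beta_lt μ h1 hk; omega
  · exact h1
  · have := beta_lt μ h1 hi; omega

lemma card_bset (μ : YoungDiagram) : (bset μ).card = μ.colLen 0 := by
  rw [bset, Finset.card_image_of_injOn (beta_inj μ), Finset.card_range]

lemma bset_inj : Function.Injective bset := by
  intro μ ν h
  have hN : μ.colLen 0 = ν.colLen 0 := by rw [← card_bset, ← card_bset, h]
  let f : Fin (μ.colLen 0) → ℕ := fun i => beta μ i
  let g : Fin (μ.colLen 0) → ℕ := fun i => beta ν i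
  have hf : StrictAnti f := fun i k hik => beta_lt μ hik k.2
  have hg : StrictAnti g := fun i k hik => beta_lt ν hik (hN ▸ k.2)
  have hr : Set.range f = Set.range g := by
    ext x
    have : x ∈ bset μ ↔ x ∈ bset ν := by rw [h]
    simp only [bset, Finset.mem_image, Finset.mem_range, ← hN] at this
    simp only [Set.mem_range, f, g, Fin.exists_iff]
    simpa using this
  have hfg := (hf.range_inj hg).1 hr
  ext ⟨i, j⟩
  simp only [YoungDiagram.mem_cells]
  by_cases hi : i < μ.colLen 0
  · have := congrFun hfg ⟨i, hi⟩
    simp only [f, g, beta, hN] at this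
    rw [YoungDiagram.mem_iff_lt_rowLen, YoungDiagram.mem_iff_lt_rowLen]
    omega
  · have h1 : ¬ (i, j) ∈ μ := fun hh => hi (by
      have := YoungDiagram.mem_iff_lt_colLen.1 hh
      have := μ.colLen_anti 0 j (Nat.zero_le _); omega)
    have h2 : ¬ (i, j) ∈ ν := fun hh => hi (by
      have := YoungDiagram.mem_iff_lt_colLen.1 hh
      have := ν.colLen_anti 0 j (Nat.zero_le _); omega)
    tauto

lemma zero_not_mem (μ : YoungDiagram) : 0 ∉ bset μ := by
  have := not_mem_bset μ 0
  simpa using this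

lemma bset_surj (X : Finset ℕ) (hX : 0 ∉ X) : ∃ μ, bset μ = X := by
  let N := X.card
  let f := X.orderEmbOfFin (rfl : X.card = N)
  have hmono : ∀ i k : Fin N, i ≤ k → f i + (k - i : ℕ) ≤ f k := by
    intro i k hik
    obtain ⟨i, hi⟩ := i
    obtain ⟨k, hk⟩ := k
    simp only [Fin.mk_le_mk] at hik
    induction k, hik using Nat.le_induction with
    | base => simp
    | succ k hik ih =>
      have h1 := ih (by omega)
      have h2 : f ⟨k, by omega⟩ < f ⟨k+1, hk⟩ := f.strictMono (by simp)
      simp only at h1 ⊢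
      omega
  have hpos : ∀ i : Fin N, (i : ℕ) < f i := by
    intro i
    have h1 := hmono ⟨0, by have := i.2; omega⟩ i (by simp [Fin.le_def])
    have h2 : f ⟨0, by have := i.2; omega⟩ ≠ 0 := by
      intro h; apply hX; rw [← h]; exact X.orderEmbOfFin_mem rfl _
    simp only at h1
    omega
  let w : List ℕ := List.ofFn (fun i : Fin N => f i.rev - (i.rev : ℕ))
  have hlen : w.length = N := by simp [w]
  have hw : w.SortedGE := by
    apply Antitone.sortedGE_ofFn
    intro i k hik
    have h1 := hmono k.rev i.rev (Fin.rev_le_rev.2 hik)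
    have h2 : (k.rev : ℕ) ≤ i.rev := Fin.rev_le_rev.2 hik
    simp only
    omega
  have hwpos : ∀ x ∈ w, 0 < x := by
    intro x hx
    simp only [w, List.mem_ofFn] at hx
    obtain ⟨i, rfl⟩ := hx
    have := hpos i.rev
    omega
  refine ⟨YoungDiagram.ofRowLens w hw, ?_⟩
  set μ := YoungDiagram.ofRowLens w hw with hμ
  have hc : μ.colLen 0 = N := by
    rw [← YoungDiagram.length_rowLens, hμ, YoungDiagram.rowLens_length_ofRowLens hwpos, hlen]
  have hrow : ∀ i (hi : i < N), beta μ i = f (Fin.rev ⟨i, hi⟩) := by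
    intro i hi
    have h1 := YoungDiagram.rowLen_ofRowLens (hw := hw) ⟨i, by omega⟩
    simp only [w, Fin.getElem_fin, List.getElem_ofFn] at h1
    have h2 := hpos (Fin.rev ⟨i, hi⟩)
    unfold beta
    rw [hc]
    have h3 : ((Fin.rev ⟨i, hi⟩ : Fin N) : ℕ) = N - 1 - i := by
      rw [Fin.val_rev]; simp only; omega
    rw [h3] at h2
    have h4 : μ.rowLen i = f (Fin.rev ⟨i, hi⟩) - (N - 1 - i) := by
      rw [← h3]; exact h1
    omega
  apply Finset.eq_of_subset_of_card_le
  · intro x hx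
    simp only [bset, Finset.mem_image, Finset.mem_range] at hx
    obtain ⟨i, hi, rfl⟩ := hx
    rw [hc] at hi
    rw [hrow i hi]
    exact X.orderEmbOfFin_mem rfl _
  · rw [card_bset, hc]

lemma card_eq_sum (μ : YoungDiagram) :
    μ.card = ∑ i ∈ Finset.range (μ.colLen 0), μ.rowLen i := by
  have : μ.card = μ.cells.card := rfl
  rw [this, Finset.card_eq_sum_card_fiberwise (f := Prod.fst) (t := Finset.range (μ.colLen 0))]
  · apply Finset.sum_congr rfl
    intro i _
    rw [YoungDiagram.rowLen_eq_card]
    rfl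
  · rintro ⟨i, j⟩ h
    have h : (i, j) ∈ μ := h
    have := YoungDiagram.mem_iff_lt_colLen.1 h
    have := μ.colLen_anti 0 j (Nat.zero_le _)
    simp; omega

/-- size of the partition with given bead set -/
def size (X : Finset ℕ) : ℚ := (∑ x ∈ X, (x : ℚ)) - (X.card : ℚ) * ((X.card : ℚ) - 1) / 2

lemma size_bset (μ : YoungDiagram) : (μ.card : ℚ) = size (bset μ) := by
  rw [size, card_bset, bset, Finset.sum_image (beta_inj μ), card_eq_sum]
  have h1 : ∑ i ∈ Finset.range (μ.colLen 0), (μ.colLen 0 - 1 - i)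
      = ∑ i ∈ Finset.range (μ.colLen 0), i := Finset.sum_range_reflect (fun i => i) _
  have h2 := Finset.sum_range_id_mul_two (μ.colLen 0)
  simp only [beta]
  push_cast
  rw [Finset.sum_add_distrib]
  have h3 : (∑ i ∈ Finset.range (μ.colLen 0), ((μ.colLen 0 - 1 - i : ℕ) : ℚ)) * 2
      = (μ.colLen 0 : ℚ) * ((μ.colLen 0 : ℚ) - 1) := by
    rw [← Nat.cast_sum, h1]
    rcases Nat.eq_zero_or_pos (μ.colLen 0) with h | h
    · simp [h]
    · have : ((∑ i ∈ Finset.range (μ.colLen 0), i : ℕ) : ℚ) * 2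
        = ((μ.colLen 0 * (μ.colLen 0 - 1) : ℕ) : ℚ) := by rw [← h2]; push_cast; ring
      rw [this]; push_cast [Nat.cast_sub (show 1 ≤ μ.colLen 0 from h)]; ring
  linarith

def XX (a b : ℕ) : Set (Finset ℕ) := {X | 0 ∉ X ∧ Cl a X ∧ Cl b X}

lemma finsum_cores (a b : ℕ) (ha : 0 < a) (hb : 0 < b) (F : ℚ → ℚ) :
    ∑ᶠ μ ∈ {μ : YoungDiagram | μ.IsCore a ∧ μ.IsCore b}, F (μ.card : ℚ)
      = ∑ᶠ X ∈ XX a b, F (size X) := by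
  apply finsum_mem_eq_of_bijOn bset
  · refine ⟨?_, bset_inj.injOn, ?_⟩
    · rintro μ ⟨h1, h2⟩
      exact ⟨zero_not_mem μ, (isCore_iff μ a ha).1 h1, (isCore_iff μ b hb).1 h2⟩
    · rintro X ⟨h0, h1, h2⟩
      obtain ⟨μ, rfl⟩ := bset_surj X h0
      exact ⟨μ, ⟨(isCore_iff μ a ha).2 h1, (isCore_iff μ b hb).2 h2⟩, rfl⟩
  · intro μ _
    rw [size_bset]

section Beads
variable (a b : ℕ) [NeZero a]

/-- least non-bead in a residue class -/
noncomputable def tt (X : Finset ℕ) (c : ZMod a) : ℕ := sInf {m | (m : ZMod a) = c ∧ m ∉ X}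

lemma tt_nonempty (X : Finset ℕ) (c : ZMod a) : {m : ℕ | (m : ZMod a) = c ∧ m ∉ X}.Nonempty := by
  refine ⟨c.val + a * (X.sup id + 1), by simp, ?_⟩
  intro h
  have h1 : c.val + a * (X.sup id + 1) ≤ X.sup id := Finset.le_sup (f := id) h
  have h2 : 1 * (X.sup id + 1) ≤ a * (X.sup id + 1) :=
    Nat.mul_le_mul_right _ (Nat.pos_of_ne_zero (NeZero.ne a))
  omega

lemma tt_cast (X : Finset ℕ) (c : ZMod a) : ((tt a X c : ℕ) : ZMod a) = c :=
  (Nat.sInf_mem (tt_nonempty a X c)).1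

lemma tt_not_mem (X : Finset ℕ) (c : ZMod a) : tt a X c ∉ X :=
  (Nat.sInf_mem (tt_nonempty a X c)).2

lemma tt_le (X : Finset ℕ) (c : ZMod a) (m : ℕ) (h : (m : ZMod a) = c) (hm : m ∉ X) :
    tt a X c ≤ m := Nat.sInf_le ⟨h, hm⟩

variable {a b}

lemma dvd_of_cast {x y : ℕ} (h : (x : ZMod a) = y) (hxy : x ≤ y) : ∃ k, y = x + a * k := by
  have h1 := (ZMod.natCast_eq_natCast_iff _ _ _).1 h
  obtain ⟨k, hk⟩ := (Nat.modEq_iff_dvd' hxy).1 h1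
  exact ⟨k, by omega⟩

lemma mem_iff_tt {X : Finset ℕ} (h : Cl a X) (m : ℕ) : m ∈ X ↔ m < tt a X (m : ZMod a) := by
  constructor
  · intro hm
    by_contra hlt
    obtain ⟨k, hk⟩ := dvd_of_cast (tt_cast a X (m : ZMod a)) (not_lt.1 hlt)
    have := h.mul k m hm (by omega)
    apply tt_not_mem a X (m : ZMod a)
    convert this using 1
    omega
  · intro hm
    by_contra hn
    have := tt_le a X _ m rfl hn
    omega

lemma tt_zero {X : Finset ℕ} (h : 0 ∉ X) : tt a X 0 = 0 :=
  Nat.le_zero.1 (tt_le a X 0 0 (by simp) h)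

lemma tt_add {X : Finset ℕ} (h : Cl b X) (c : ZMod a) : tt a X (c + b) ≤ tt a X c + b := by
  apply tt_le
  · push_cast; rw [tt_cast]
  · intro hm
    have := h _ hm (by omega)
    rw [Nat.add_sub_cancel] at this
    exact tt_not_mem a X c this

/-- the composition attached to a bead set and a rooting -/
noncomputable def zz (a b : ℕ) [NeZero a] (p : Finset ℕ × ZMod a) (k : ZMod a) : ℕ :=
  (tt a p.1 (p.2 + k * b) + b - tt a p.1 (p.2 + (k + 1) * b)) / a

lemma zz_spec {X : Finset ℕ} (h : Cl b X) (r k : ZMod a) :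
    tt a X (r + k * b) + b = tt a X (r + (k + 1) * b) + a * zz a b (X, r) k := by
  have h1 : r + (k + 1) * b = (r + k * b) + (b : ZMod a) := by ring
  have h2 := tt_add (a := a) h (r + k * (b : ZMod a))
  rw [← h1] at h2
  obtain ⟨q, hq⟩ := dvd_of_cast (a := a) (by push_cast; rw [tt_cast, tt_cast, h1]) h2
  rw [hq, zz]
  simp only
  rw [hq, Nat.add_sub_cancel_left, Nat.mul_div_cancel_left _ (Nat.pos_of_ne_zero (NeZero.ne a))]

lemma zz_sum {X : Finset ℕ} (h : Cl b X) (r : ZMod a) : ∑ k, zz a b (X, r) k = b := by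
  have h1 : ∑ k : ZMod a, (tt a X (r + k * b) + b)
      = ∑ k : ZMod a, (tt a X (r + (k + 1) * b) + a * zz a b (X, r) k) :=
    Finset.sum_congr rfl fun k _ => zz_spec h r k
  rw [Finset.sum_add_distrib, Finset.sum_add_distrib, ← Finset.mul_sum] at h1
  have h2 : ∑ k : ZMod a, tt a X (r + (k + 1) * b) = ∑ k : ZMod a, tt a X (r + k * b) :=
    Equiv.sum_comp (Equiv.addRight (1 : ZMod a)) (fun k => tt a X (r + k * b))
  rw [h2, Finset.sum_const, Finset.card_univ, ZMod.card, smul_eq_mul] at h1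
  have := Nat.add_left_cancel h1
  exact (Nat.eq_of_mul_eq_mul_left (Nat.pos_of_ne_zero (NeZero.ne a)) this).symm

/-- cyclic induction -/
lemma zmod_induct {P : ZMod a → Prop} (h0 : P 0) (hs : ∀ k, P k → P (k + 1)) (k : ZMod a) : P k := by
  have h : ∀ m : ℕ, P (m : ZMod a) := by
    intro m
    induction m with
    | zero => simpa using h0
    | succ m ih => push_cast; exact hs _ ih
  have := h k.val
  simpa using this

lemma exists_root (hab : Nat.Coprime a b) (r c : ZMod a) : ∃ k : ZMod a, r + k * b = c := by
  have hu : (b : ZMod a) * (b : ZMod a)⁻¹ = 1 := ZMod.coe_mul_inv_eq_one b hab.symm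
  refine ⟨(c - r) * (b : ZMod a)⁻¹, ?_⟩
  rw [mul_assoc, mul_comm _ (b : ZMod a), hu]; ring

lemma zz_inj (hab : Nat.Coprime a b) :
    Set.InjOn (zz a b) (XX a b ×ˢ (Set.univ : Set (ZMod a))) := by
  rintro ⟨X, r⟩ ⟨⟨hX0, hXa, hXb⟩, -⟩ ⟨Y, s⟩ ⟨⟨hY0, hYa, hYb⟩, -⟩ heq
  have key : ∀ k : ZMod a, tt a X (r + k * b) + tt a Y s = tt a Y (s + k * b) + tt a X r := by
    apply zmod_induct
    · simp [add_comm]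
    · intro k ih
      have h1 := zz_spec (X := X) hXb r k
      have h2 := zz_spec (X := Y) hYb s k
      have h3 := congrFun heq k
      rw [h3] at h1
      omega
  have hrs : tt a X r = tt a Y s := by
    obtain ⟨k, hk⟩ := exists_root hab r 0
    obtain ⟨l, hl⟩ := exists_root hab s 0
    have h1 := key k
    have h2 := key l
    rw [hk, tt_zero hX0] at h1
    rw [hl, tt_zero hY0] at h2
    omega
  have hr : r = s := by rw [← tt_cast a X r, hrs, tt_cast]
  subst hr
  have htt : ∀ c, tt a X c = tt a Y c := by
    intro c
    obtain ⟨k, hk⟩ := exists_root hab r c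
    have := key k
    rw [hk] at this
    omega
  have : X = Y := by
    ext m
    rw [mem_iff_tt hXa, mem_iff_tt hYa, htt]
  rw [this]

lemma exists_u (z : ZMod a → ℕ) (hz : ∑ k, z k = b) :
    ∃ u : ZMod a → ℤ, u 0 = 0 ∧ ∀ k, u k + b = u (k + 1) + a * z k := by
  let S : ℕ → ℤ := fun m => m * b - a * ∑ i ∈ Finset.range m, (z (i : ZMod a) : ℤ)
  have hS : ∀ m, S m + b = S (m + 1) + a * z (m : ZMod a) := by
    intro m; simp only [S, Finset.sum_range_succ]; push_cast; ring
  have hper : S a = 0 := by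
    have : ∑ i ∈ Finset.range a, (z (i : ZMod a) : ℤ) = b := by
      rw [← hz]
      push_cast
      apply Finset.sum_bij (fun (i : ℕ) _ => (i : ZMod a))
      · simp
      · intro i hi j hj hij
        simp only [Finset.mem_range] at hi hj
        have := (ZMod.natCast_eq_natCast_iff _ _ _).1 hij
        rwa [Nat.ModEq, Nat.mod_eq_of_lt hi, Nat.mod_eq_of_lt hj] at this
      · intro c _
        exact ⟨c.val, by simp [ZMod.val_lt], by simp⟩
      · intros; rfl
    simp only [S, this]; ring
  refine ⟨fun c => S c.val, by simp [S], ?_⟩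
  intro k
  have h1 := hS k.val
  rw [ZMod.natCast_val, ZMod.cast_id', id] at h1
  by_cases hk : k.val + 1 < a
  · have : (k + 1).val = k.val + 1 := by
      have h2 : ((k.val + 1 : ℕ) : ZMod a) = k + 1 := by push_cast; simp
      rw [← h2, ZMod.val_natCast, Nat.mod_eq_of_lt hk]
    simp only
    rw [this]; exact h1
  · have h3 : k.val + 1 = a := by have := ZMod.val_lt k; omega
    have : k + 1 = 0 := by
      have h2 : ((k.val + 1 : ℕ) : ZMod a) = k + 1 := by push_cast; simp
      rw [← h2, h3]; simp
    simp only
    rw [this, h1, h3, hper]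
    simp [S]

lemma zz_surj (hab : Nat.Coprime a b) (z : ZMod a → ℕ) (hz : ∑ k, z k = b) :
    ∃ p ∈ XX a b ×ˢ (Set.univ : Set (ZMod a)), zz a b p = z := by
  obtain ⟨u, hu0, hu⟩ := exists_u z hz
  obtain ⟨k0, hk0⟩ := Finite.exists_min u
  have hunit : (b : ZMod a) * (b : ZMod a)⁻¹ = 1 := ZMod.coe_mul_inv_eq_one b hab.symm
  have hucast : ∀ k, ((u k : ℤ) : ZMod a) = k * b := by
    apply zmod_induct
    · simp [hu0]
    · intro k ih
      have h1 : u (k + 1) = u k + b - a * z k := by linarith [hu k]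
      rw [h1]; push_cast; rw [ih]; simp; ring
  let r : ZMod a := - (k0 * b)
  let κ : ZMod a → ZMod a := fun c => (c - r) * (b : ZMod a)⁻¹
  have hκ : ∀ k, κ (r + k * b) = k := by
    intro k
    simp only [κ]
    rw [add_sub_cancel_left, mul_assoc, hunit, mul_one]
  have hκ' : ∀ c, r + κ c * b = c := by
    intro c
    simp only [κ]
    rw [mul_assoc, mul_comm _ (b : ZMod a), hunit]; ring
  let t : ZMod a → ℕ := fun c => (u (κ c) - u k0).toNat
  have ht : ∀ c, (t c : ℤ) = u (κ c) - u k0 := fun c =>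
    Int.toNat_of_nonneg (by linarith [hk0 (κ c)])
  have htc : ∀ c, (t c : ZMod a) = c := by
    intro c
    have : ((t c : ℤ) : ZMod a) = c := by
      rw [ht]; push_cast; rw [hucast, hucast]
      have := hκ' c
      simp only [r] at this
      linear_combination this
    simpa using this
  have ht0 : t 0 = 0 := by
    have h1 : κ 0 = k0 := by
      have := hκ k0
      simpa [r] using this
    have := ht 0
    rw [h1] at this
    omega
  have htb : ∀ c, t (c + b) ≤ t c + b := by
    intro c
    have h1 : κ (c + b) = κ c + 1 := by
      rw [← hκ (κ c + 1)]
      congr 1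
      linear_combination (-1 : ZMod a) * hκ' c
    have h2 := hu (κ c)
    have h3 := ht (c + b)
    have h4 := ht c
    rw [h1] at h3
    have : (0 : ℤ) ≤ a * z (κ c) := by positivity
    omega
  let X : Finset ℕ := (Finset.range (∑ c, t c)).filter (fun m => m < t (m : ZMod a))
  have hX : ∀ m, m ∈ X ↔ m < t (m : ZMod a) := by
    intro m
    simp only [X, Finset.mem_filter, Finset.mem_range, and_iff_right_iff_imp]
    intro h
    exact lt_of_lt_of_le h (Finset.single_le_sum (f := t) (by simp) (Finset.mem_univ _))
  have hXa : Cl a X := by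
    intro x hx hax
    rw [hX] at hx ⊢
    have : ((x - a : ℕ) : ZMod a) = x := by rw [Nat.cast_sub hax]; simp
    rw [this]; omega
  have hXb : Cl b X := by
    intro x hx hbx
    rw [hX] at hx ⊢
    have h1 : ((x - b : ℕ) : ZMod a) + b = x := by rw [Nat.cast_sub hbx]; simp
    have := htb ((x - b : ℕ) : ZMod a)
    rw [h1] at this
    omega
  have hX0 : 0 ∉ X := by rw [hX]; simp [ht0]
  have htt : ∀ c, tt a X c = t c := by
    intro c
    apply le_antisymm
    · apply tt_le _ _ _ _ (htc c)
      rw [hX, htc]; omega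
    · have := tt_not_mem a X c
      rw [hX, tt_cast] at this
      omega
  refine ⟨(X, r), ⟨⟨hX0, hXa, hXb⟩, trivial⟩, ?_⟩
  funext k
  have h1 := zz_spec hXb r k
  rw [htt, htt] at h1
  have h2 := hu k
  have h3 := ht (r + k * b)
  have h4 := ht (r + (k + 1) * b)
  rw [hκ] at h3 h4
  have h5 : (a : ℤ) * zz a b (X, r) k = a * z k := by
    have : ((t (r + k * b) : ℤ) + b) = t (r + (k+1) * b) + a * zz a b (X, r) k := by exact_mod_cast h1
    linarith
  have ha : (a : ℤ) ≠ 0 := by exact_mod_cast NeZero.ne a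
  exact_mod_cast mul_left_cancel₀ ha h5

def Comp (a b : ℕ) [NeZero a] : Finset (ZMod a → ℕ) := Finset.piAntidiag Finset.univ b

lemma mem_Comp (z : ZMod a → ℕ) : z ∈ Comp a b ↔ ∑ k, z k = b := by simp [Comp]

lemma zz_bij (hab : Nat.Coprime a b) :
    Set.BijOn (zz a b) (XX a b ×ˢ (Set.univ : Set (ZMod a))) (Comp a b : Set (ZMod a → ℕ)) := by
  refine ⟨?_, zz_inj hab, ?_⟩
  · rintro ⟨X, r⟩ ⟨⟨_, _, hb⟩, -⟩
    exact (mem_Comp _).2 (zz_sum hb r)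
  · intro z hz
    exact zz_surj hab z ((mem_Comp _).1 hz)

lemma finsum_XX (hab : Nat.Coprime a b) (F : Finset ℕ → ℚ) (G : (ZMod a → ℕ) → ℚ)
    (hFG : ∀ X ∈ XX a b, ∀ r, F X = G (zz a b (X, r))) :
    (a : ℚ) * ∑ᶠ X ∈ XX a b, F X = ∑ z ∈ Comp a b, G z := by
  have hbij := zz_bij hab
  have hfin : (XX a b ×ˢ (Set.univ : Set (ZMod a))).Finite :=
    Set.Finite.of_finite_image ((Comp a b).finite_toSet.subset hbij.mapsTo.image_subset) hbij.injOn
  have hfin' : (XX a b).Finite := by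
    have := hfin.image Prod.fst
    refine this.subset ?_
    intro X hX
    exact ⟨(X, 0), ⟨hX, trivial⟩, rfl⟩
  have h1 : ∑ᶠ p ∈ XX a b ×ˢ (Set.univ : Set (ZMod a)), F p.1
      = ∑ᶠ z ∈ (Comp a b : Set (ZMod a → ℕ)), G z :=
    finsum_mem_eq_of_bijOn _ hbij (fun p hp => hFG p.1 hp.1 p.2)
  rw [finsum_mem_coe_finset] at h1
  rw [← h1]
  have h2 : XX a b ×ˢ (Set.univ : Set (ZMod a))
      = ((hfin'.toFinset ×ˢ (Finset.univ : Finset (ZMod a)) : Finset _) : Set _) := by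
    simp
  rw [h2, finsum_mem_coe_finset, Finset.sum_product]
  simp only [Finset.sum_const, Finset.card_univ, ZMod.card, nsmul_eq_mul]
  rw [← Finset.mul_sum, finsum_mem_eq_finite_toFinset_sum _ hfin']

lemma sum_val (f : ℕ → ℚ) : ∑ c : ZMod a, f c.val = ∑ i ∈ Finset.range a, f i := by
  symm
  apply Finset.sum_bij (fun (i : ℕ) _ => (i : ZMod a))
  · simp
  · intro i hi j hj hij
    simp only [Finset.mem_range] at hi hj
    have := (ZMod.natCast_eq_natCast_iff _ _ _).1 hij
    rwa [Nat.ModEq, Nat.mod_eq_of_lt hi, Nat.mod_eq_of_lt hj] at this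
  · intro c _
    exact ⟨c.val, by simp [ZMod.val_lt], by simp⟩
  · intro i hi
    simp only [Finset.mem_range] at hi
    rw [ZMod.val_natCast, Nat.mod_eq_of_lt hi]

lemma sum_range1 (m : ℕ) : ∑ i ∈ Finset.range m, (i : ℚ) = m * (m - 1) / 2 := by
  induction m with
  | zero => simp
  | succ m ih => rw [Finset.sum_range_succ, ih]; push_cast; ring

lemma sum_range2 (m : ℕ) : ∑ i ∈ Finset.range m, (i : ℚ) ^ 2 = m * (m - 1) * (2 * m - 1) / 6 := by
  induction m with
  | zero => simp
  | succ m ih => rw [Finset.sum_range_succ, ih]; push_cast; ring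

lemma sum_range3 (m : ℕ) : ∑ i ∈ Finset.range m, (i : ℚ) ^ 3 = (m * (m - 1) / 2) ^ 2 := by
  induction m with
  | zero => simp
  | succ m ih => rw [Finset.sum_range_succ, ih]; push_cast; ring

lemma sum_range4 (m : ℕ) : ∑ i ∈ Finset.range m, (i : ℚ) ^ 4
    = m * (m - 1) * (2 * m - 1) * (3 * m ^ 2 - 3 * m - 1) / 30 := by
  induction m with
  | zero => simp
  | succ m ih => rw [Finset.sum_range_succ, ih]; push_cast; ring

lemma tt_eq (X : Finset ℕ) (c : ZMod a) : tt a X c = c.val + a * (tt a X c / a) := by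
  have h : c.val = tt a X c % a := by
    conv_lhs => rw [← tt_cast a X c]
    rw [ZMod.val_natCast]
  rw [h]
  exact (Nat.mod_add_div _ _).symm

lemma sum_X {X : Finset ℕ} (h : Cl a X) (f : ℕ → ℚ) :
    ∑ x ∈ X, f x = ∑ c : ZMod a, ∑ k ∈ Finset.range (tt a X c / a), f (c.val + a * k) := by
  have ha : 0 < a := Nat.pos_of_ne_zero (NeZero.ne a)
  rw [← Finset.sum_fiberwise X (fun x => (x : ZMod a)) f]
  apply Finset.sum_congr rfl
  intro c _
  have himg : X.filter (fun x : ℕ => (x : ZMod a) = c)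
      = (Finset.range (tt a X c / a)).image (fun k => c.val + a * k) := by
    ext x
    simp only [Finset.mem_filter, Finset.mem_image, Finset.mem_range]
    constructor
    · rintro ⟨hx, rfl⟩
      rw [mem_iff_tt h] at hx
      have h1 := tt_eq X (x : ZMod a)
      have h2 : (x : ZMod a).val = x % a := ZMod.val_natCast a x
      refine ⟨x / a, ?_, by rw [h2]; exact Nat.mod_add_div _ _⟩
      rw [h2] at h1
      by_contra hc
      have h3 := Nat.mul_le_mul_left a (not_lt.1 hc)
      have := Nat.mod_add_div x a
      omega
    · rintro ⟨k, hk, rfl⟩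
      have hc : ((c.val + a * k : ℕ) : ZMod a) = c := by simp
      refine ⟨?_, hc⟩
      rw [mem_iff_tt h, hc]
      have h1 := tt_eq X c
      have h3 := Nat.mul_lt_mul_of_pos_left hk ha
      omega
  rw [himg, Finset.sum_image]
  intro k _ l _ hkl
  simp only at hkl
  exact Nat.eq_of_mul_eq_mul_left ha (by omega)

lemma size_eq_t {X : Finset ℕ} (h : Cl a X) :
    size X = ((a : ℚ) * ∑ c : ZMod a, (tt a X c : ℚ) ^ 2 - (∑ c : ZMod a, (tt a X c : ℚ)) ^ 2)
      / (2 * a ^ 2) - ((a : ℚ) ^ 2 - 1) / 24 := by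
  have ha : (a : ℚ) ≠ 0 := by exact_mod_cast NeZero.ne a
  set q : ZMod a → ℚ := fun c => ((tt a X c / a : ℕ) : ℚ) with hq
  have ht : ∀ c, (tt a X c : ℚ) = c.val + a * q c := by
    intro c
    have := tt_eq X c
    simp only [hq]
    exact_mod_cast this
  have hcard : (X.card : ℚ) = ∑ c, q c := by
    have := sum_X h (fun _ => (1 : ℚ))
    simpa using this
  have hsum : ∑ x ∈ X, (x : ℚ) = ∑ c : ZMod a, (q c * c.val + a * (q c * (q c - 1) / 2)) := by
    rw [sum_X h]
    apply Finset.sum_congr rfl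
    intro c _
    push_cast
    rw [Finset.sum_add_distrib, ← Finset.mul_sum, sum_range1]
    simp [hq]
  have hv1 : ∑ c : ZMod a, (c.val : ℚ) = a * (a - 1) / 2 := by
    rw [sum_val (fun i => (i : ℚ)), sum_range1]
  have hv2 : ∑ c : ZMod a, (c.val : ℚ) ^ 2 = a * (a - 1) * (2 * a - 1) / 6 := by
    rw [sum_val (fun i => (i : ℚ) ^ 2), sum_range2]
  have e1 : ∑ c : ZMod a, (tt a X c : ℚ) = a * (a - 1) / 2 + a * ∑ c, q c := by
    rw [← hv1, Finset.mul_sum, ← Finset.sum_add_distrib]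
    exact Finset.sum_congr rfl fun c _ => ht c
  have e2 : ∑ c : ZMod a, (tt a X c : ℚ) ^ 2 = a * (a - 1) * (2 * a - 1) / 6
      + 2 * a * ∑ c, q c * c.val + a ^ 2 * ∑ c, q c ^ 2 := by
    rw [← hv2, Finset.mul_sum, Finset.mul_sum, ← Finset.sum_add_distrib, ← Finset.sum_add_distrib]
    apply Finset.sum_congr rfl
    intro c _
    rw [ht c]; ring
  have e3 : ∑ x ∈ X, (x : ℚ) = ∑ c, q c * c.val + a / 2 * ∑ c, q c ^ 2 - a / 2 * ∑ c, q c := by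
    rw [hsum, Finset.mul_sum, Finset.mul_sum, ← Finset.sum_add_distrib, ← Finset.sum_sub_distrib]
    apply Finset.sum_congr rfl
    intro c _
    ring
  rw [size, hcard, e3, e1, e2]
  field_simp
  ring

/-- the cyclic weight -/
def ww (a : ℕ) (c : ZMod a) : ℚ := c.val * ((a : ℚ) - c.val)

lemma val_succ (c : ZMod a) : (c + 1).val = c.val + 1 ∨ (c.val + 1 = a ∧ c + 1 = 0) := by
  have h2 : ((c.val + 1 : ℕ) : ZMod a) = c + 1 := by push_cast; simp
  by_cases hk : c.val + 1 < a
  · left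
    rw [← h2, ZMod.val_natCast, Nat.mod_eq_of_lt hk]
  · right
    have h3 : c.val + 1 = a := by have := ZMod.val_lt c; omega
    refine ⟨h3, ?_⟩
    rw [← h2, h3]; simp

lemma ww_succ (c : ZMod a) : ww a (c + 1) = (c.val + 1) * ((a : ℚ) - c.val - 1) := by
  rcases val_succ c with h | ⟨h, h'⟩
  · rw [ww, h]; push_cast; ring
  · have : (a : ℚ) = c.val + 1 := by exact_mod_cast h.symm
    rw [h', ww, this]; simp

lemma ww_second (c : ZMod a) :
    2 * ww a c - ww a (c - 1) - ww a (c + 1) = 2 - 2 * a * (if c = 0 then 1 else 0) := by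
  obtain ⟨d, rfl⟩ : ∃ d, c = d + 1 := ⟨c - 1, by ring⟩
  rw [ww_succ (d + 1), ww_succ d, add_sub_cancel_right]
  rcases val_succ d with h | ⟨h, h'⟩
  · have : d + 1 ≠ 0 := by intro h0; rw [h0] at h; simp at h
    rw [if_neg this, h, ww]; push_cast; ring
  · have : (a : ℚ) = d.val + 1 := by exact_mod_cast h.symm
    rw [h', ww, this]; simp; ring

lemma ww_neg (c : ZMod a) : ww a (-c) = ww a c := by
  unfold ww
  by_cases h : c = 0
  · simp [h]
  · have : NeZero c := ⟨h⟩
    rw [ZMod.val_neg_of_ne_zero, Nat.cast_sub (ZMod.val_lt c).le]; ring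

lemma ww_sum : ∑ c : ZMod a, ww a c = a * ((a : ℚ) ^ 2 - 1) / 6 := by
  unfold ww
  rw [sum_val (fun i => (i : ℚ) * (a - i))]
  have : ∀ i ∈ Finset.range a, (i : ℚ) * (a - i) = a * i - (i : ℚ) ^ 2 := fun i _ => by ring
  rw [Finset.sum_congr rfl this, Finset.sum_sub_distrib, ← Finset.mul_sum, sum_range1, sum_range2]
  ring

lemma ww_sum_sq : ∑ c : ZMod a, ww a c ^ 2 = a * ((a : ℚ) ^ 4 - 1) / 30 := by
  unfold ww
  rw [sum_val (fun i => ((i : ℚ) * (a - i)) ^ 2)]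
  have : ∀ i ∈ Finset.range a, ((i : ℚ) * (a - i)) ^ 2
      = a ^ 2 * (i : ℚ) ^ 2 - 2 * a * (i : ℚ) ^ 3 + (i : ℚ) ^ 4 := fun i _ => by ring
  rw [Finset.sum_congr rfl this, Finset.sum_add_distrib, Finset.sum_sub_distrib, ← Finset.mul_sum,
    ← Finset.mul_sum, sum_range2, sum_range3, sum_range4]
  ring

lemma sum_sub_left (f : ZMod a → ℚ) (i : ZMod a) : ∑ j, f (i - j) = ∑ c, f c :=
  Equiv.sum_comp (Equiv.subLeft i) f

lemma sum_shift (f : ZMod a → ℚ) : ∑ j, f (j + 1) = ∑ c, f c :=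
  Equiv.sum_comp (Equiv.addRight (1 : ZMod a)) f

lemma quad (u : ZMod a → ℚ) :
    ∑ i, ∑ j, ww a (i - j) * (u (i + 1) - u i) * (u (j + 1) - u j)
      = 2 * (∑ i, u i) ^ 2 - 2 * a * ∑ i, u i ^ 2 := by
  have h1 : ∀ i, ∑ j, ww a (i - j) * (u (i + 1) - u i) * (u (j + 1) - u j)
      = ∑ j, (u (i + 1) - u i) * (ww a (i - j + 1) - ww a (i - j)) * u j := by
    intro i
    have e := sum_shift (fun j => ww a (i - j + 1) * (u (i + 1) - u i) * u j)
    have e' : ∀ j, i - (j + 1) + 1 = i - j := fun j => by ring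
    simp only [e'] at e
    have : ∑ j, ww a (i - j) * (u (i + 1) - u i) * (u (j + 1) - u j)
        = ∑ j, ww a (i - j) * (u (i + 1) - u i) * u (j + 1)
          - ∑ j, ww a (i - j) * (u (i + 1) - u i) * u j := by
      rw [← Finset.sum_sub_distrib]; exact Finset.sum_congr rfl fun j _ => by ring
    rw [this, e, ← Finset.sum_sub_distrib]; exact Finset.sum_congr rfl fun j _ => by ring
  have h2 : ∀ j, ∑ i, (u (i + 1) - u i) * (ww a (i - j + 1) - ww a (i - j)) * u j
      = ∑ i, u i * u j * (2 - 2 * a * (if i - j = 0 then 1 else 0)) := by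
    intro j
    have e := sum_shift (fun i => u i * (ww a (i - j) - ww a (i - j - 1)) * u j)
    have e' : ∀ i, i + 1 - j = i - j + 1 := fun i => by ring
    have eshift : ∀ i, i - j + 1 - 1 = i - j := fun i => by ring
    simp only [e', eshift] at e
    have : ∑ i, (u (i + 1) - u i) * (ww a (i - j + 1) - ww a (i - j)) * u j
        = ∑ i, u (i + 1) * (ww a (i - j + 1) - ww a (i - j)) * u j
          - ∑ i, u i * (ww a (i - j + 1) - ww a (i - j)) * u j := by
      rw [← Finset.sum_sub_distrib]; exact Finset.sum_congr rfl fun j _ => by ring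
    rw [this, e, ← Finset.sum_sub_distrib]
    apply Finset.sum_congr rfl
    intro i _
    rw [← ww_second]; ring
  rw [Finset.sum_congr rfl fun i _ => h1 i, Finset.sum_comm, Finset.sum_congr rfl fun j _ => h2 j]
  have h3 : ∀ j, ∑ i, u i * u j * (2 - 2 * a * (if i - j = 0 then 1 else 0))
      = 2 * (∑ i, u i) * u j - 2 * a * u j ^ 2 := by
    intro j
    simp only [sub_eq_zero, mul_sub, Finset.sum_sub_distrib, mul_ite, mul_one, mul_zero,
      Finset.sum_ite_eq', Finset.mem_univ, if_true]
    rw [← Finset.sum_mul, ← Finset.sum_mul]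
    ring
  rw [Finset.sum_congr rfl fun j _ => h3 j, Finset.sum_sub_distrib, ← Finset.mul_sum,
    ← Finset.mul_sum]
  ring

/-- The quadratic form. -/
def HH (a : ℕ) [NeZero a] (z : ZMod a → ℕ) : ℚ := ∑ i, ∑ j, ww a (i - j) * (z i * z j)

lemma size_eq (hab : Nat.Coprime a b) {X : Finset ℕ} (hX : X ∈ XX a b) (r : ZMod a) :
    size X = ((a : ℚ) ^ 2 - 1) * ((b : ℚ) ^ 2 - 1) / 24 - HH a (zz a b (X, r)) / 4 := by
  obtain ⟨-, hXa, hXb⟩ := hX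
  have ha : (a : ℚ) ≠ 0 := by exact_mod_cast NeZero.ne a
  set u : ZMod a → ℚ := fun k => (tt a X (r + k * b) : ℚ) with hu
  set z : ZMod a → ℕ := zz a b (X, r) with hz
  have hbij : Function.Bijective (fun k : ZMod a => r + k * b) :=
    Finite.surjective_iff_bijective.1 fun c => exists_root hab r c
  have e1 : ∑ c : ZMod a, (tt a X c : ℚ) = ∑ k, u k :=
    (hbij.sum_comp (fun c => (tt a X c : ℚ))).symm
  have e2 : ∑ c : ZMod a, (tt a X c : ℚ) ^ 2 = ∑ k, u k ^ 2 :=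
    (hbij.sum_comp (fun c => (tt a X c : ℚ) ^ 2)).symm
  have hd : ∀ k, u (k + 1) - u k = b - a * z k := by
    intro k
    have := zz_spec hXb r k
    have h2 : (tt a X (r + k * b) : ℚ) + b = tt a X (r + (k + 1) * b) + a * zz a b (X, r) k := by
      exact_mod_cast this
    simp only [hu, hz]; linarith
  have hs : ∑ k, (z k : ℚ) = b := by exact_mod_cast zz_sum hXb r
  have hq := quad u
  simp only [hd] at hq
  have hL : ∑ i, ∑ j, ww a (i - j) * ((b : ℚ) - a * z i) * (b - a * z j)
      = a ^ 2 * HH a z - a * (b : ℚ) ^ 2 * (a * ((a : ℚ) ^ 2 - 1) / 6) := by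
    have t0 : ∑ i : ZMod a, ∑ j, ww a (i - j) = a * (a * ((a : ℚ) ^ 2 - 1) / 6) := by
      simp only [sum_sub_left (ww a), ww_sum]
      simp [ZMod.card]
    have t1 : ∑ i : ZMod a, ∑ j, ww a (i - j) * (z i : ℚ) = b * (a * ((a : ℚ) ^ 2 - 1) / 6) := by
      simp only [← Finset.sum_mul, sum_sub_left (ww a), ww_sum]
      rw [← Finset.mul_sum, hs]; ring
    have t2 : ∑ i : ZMod a, ∑ j, ww a (i - j) * (z j : ℚ) = b * (a * ((a : ℚ) ^ 2 - 1) / 6) := by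
      rw [← t1, Finset.sum_comm]
      apply Finset.sum_congr rfl; intro i _
      apply Finset.sum_congr rfl; intro j _
      rw [← ww_neg, neg_sub]
    have : ∑ i, ∑ j, ww a (i - j) * ((b : ℚ) - a * z i) * (b - a * z j)
        = b ^ 2 * ∑ i : ZMod a, ∑ j, ww a (i - j)
          - a * b * ∑ i : ZMod a, ∑ j, ww a (i - j) * (z i : ℚ)
          - a * b * ∑ i : ZMod a, ∑ j, ww a (i - j) * (z j : ℚ) + a ^ 2 * HH a z := by
      simp only [HH, Finset.mul_sum, ← Finset.sum_sub_distrib, ← Finset.sum_add_distrib]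
      apply Finset.sum_congr rfl; intro i _
      apply Finset.sum_congr rfl; intro j _
      ring
    rw [this, t0, t1, t2]; ring
  rw [hL] at hq
  rw [size_eq_t hXa, e1, e2]
  have : (a : ℚ) * ∑ k, u k ^ 2 - (∑ k, u k) ^ 2
      = (a * (b : ℚ) ^ 2 * (a * ((a : ℚ) ^ 2 - 1) / 6) - a ^ 2 * HH a z) / 2 := by linarith
  rw [this]
  field_simp
  ring

end Beads

section Moments
variable {ι : Type*} [Fintype ι] [DecidableEq ι]

lemma coeff_aux (k m : ℕ) :
    PowerSeries.coeff m ((PowerSeries.X : PowerSeries ℚ) ^ k * (PowerSeries.mk 1) ^ (k + 1))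
      = (m.choose k : ℚ) := by
  rw [PowerSeries.coeff_X_pow_mul', PowerSeries.mk_one_pow_eq_mk_choose_add]
  split_ifs with h
  · rw [PowerSeries.coeff_mk, Nat.add_sub_cancel' h]
  · rw [Nat.choose_eq_zero_of_lt (by omega)]; simp

lemma fact_moment (b n : ℕ) (hn : Fintype.card ι = n + 1) (k : ι → ℕ) :
    ∑ z ∈ Finset.piAntidiag (Finset.univ : Finset ι) b, ∏ i, ((z i).choose (k i) : ℚ)
      = ((n + b).choose (n + ∑ i, k i) : ℚ) := by
  have h1 := PowerSeries.coeff_prod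
    (fun i => (PowerSeries.X : PowerSeries ℚ) ^ (k i) * (PowerSeries.mk 1) ^ (k i + 1)) b
    (Finset.univ : Finset ι)
  simp only [coeff_aux] at h1
  have h2 : ∑ l ∈ Finset.finsuppAntidiag (Finset.univ : Finset ι) b,
        ∏ i, ((l i).choose (k i) : ℚ)
      = ∑ z ∈ Finset.piAntidiag (Finset.univ : Finset ι) b, ∏ i, ((z i).choose (k i) : ℚ) := by
    apply Finset.sum_bij (fun (l : ι →₀ ℕ) _ => (l : ι → ℕ))
    · intro l hl; simpa using hl
    · intro l _ l' _ h; exact DFunLike.coe_injective h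
    · intro z hz
      exact ⟨Finsupp.equivFunOnFinite.symm z, by simpa using hz, by simp⟩
    · intros; rfl
  rw [← h2, ← h1, Finset.prod_mul_distrib, Finset.prod_pow_eq_pow_sum, Finset.prod_pow_eq_pow_sum,
    Finset.sum_add_distrib]
  simp only [Finset.sum_const, Finset.card_univ, hn, smul_eq_mul, mul_one]
  rw [← add_assoc, PowerSeries.coeff_X_pow_mul', PowerSeries.mk_one_pow_eq_mk_choose_add]
  split_ifs with h
  · rw [PowerSeries.coeff_mk]
    congr 2 <;> omega
  · rw [Nat.choose_eq_zero_of_lt (by omega)]; simp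

lemma sq_choose (m : ℕ) : (m : ℚ) ^ 2 = 2 * (m.choose 2 : ℚ) + (m.choose 1 : ℚ) := by
  rw [Nat.cast_choose_two, Nat.choose_one_right]; ring

lemma mom2 (b n : ℕ) (hn : Fintype.card ι = n + 1) {i j : ι} (hij : i ≠ j) (p q : ℕ) :
    ∑ z ∈ Finset.piAntidiag (Finset.univ : Finset ι) b, ((z i).choose p : ℚ) * (z j).choose q
      = ((n + b).choose (n + (p + q)) : ℚ) := by
  have h := fact_moment b n hn (fun x => if x = i then p else if x = j then q else 0)
  have hs : ∑ x, (fun x => if x = i then p else if x = j then q else 0) x = p + q := by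
    rw [← Finset.sum_subset (Finset.subset_univ ({i, j} : Finset ι))]
    · rw [Finset.sum_pair hij]; simp [hij.symm]
    · intro x _ hx; simp at hx; simp [hx]
  rw [hs] at h
  rw [← h]
  apply Finset.sum_congr rfl
  intro z _
  rw [← Finset.prod_subset (Finset.subset_univ ({i, j} : Finset ι))]
  · rw [Finset.prod_pair hij]; simp [hij.symm]
  · intro x _ hx; simp at hx; simp [hx]

lemma mom3 (b n : ℕ) (hn : Fintype.card ι = n + 1) {i j k : ι} (hij : i ≠ j) (hik : i ≠ k)
    (hjk : j ≠ k) (p q r : ℕ) :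
    ∑ z ∈ Finset.piAntidiag (Finset.univ : Finset ι) b,
      ((z i).choose p : ℚ) * ((z j).choose q * (z k).choose r)
      = ((n + b).choose (n + (p + (q + r))) : ℚ) := by
  have h := fact_moment b n hn
    (fun x => if x = i then p else if x = j then q else if x = k then r else 0)
  have hs : ∑ x, (fun x => if x = i then p else if x = j then q else if x = k then r else 0) x
      = p + (q + r) := by
    rw [← Finset.sum_subset (Finset.subset_univ ({i, j, k} : Finset ι))]
    · rw [Finset.sum_insert (by simp [hij, hik]), Finset.sum_pair hjk]
      simp [hij.symm, hik.symm, hjk.symm]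
    · intro x _ hx; simp at hx; simp [hx]
  rw [hs] at h
  rw [← h]
  apply Finset.sum_congr rfl
  intro z _
  rw [← Finset.prod_subset (Finset.subset_univ ({i, j, k} : Finset ι))]
  · rw [Finset.prod_insert (by simp [hij, hik]), Finset.prod_pair hjk]
    simp [hij.symm, hik.symm, hjk.symm]
  · intro x _ hx; simp at hx; simp [hx]

lemma mom4 (b n : ℕ) (hn : Fintype.card ι = n + 1) {i j k l : ι} (hij : i ≠ j) (hik : i ≠ k)
    (hil : i ≠ l) (hjk : j ≠ k) (hjl : j ≠ l) (hkl : k ≠ l) :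
    ∑ z ∈ Finset.piAntidiag (Finset.univ : Finset ι) b,
      ((z i : ℚ) * (z j * (z k * z l)))
      = ((n + b).choose (n + 4) : ℚ) := by
  have h := fact_moment b n hn
    (fun x => if x = i then 1 else if x = j then 1 else if x = k then 1 else if x = l then 1 else 0)
  have hs : ∑ x, (fun x => if x = i then 1 else if x = j then 1 else if x = k then 1 else
      if x = l then 1 else 0) x = 4 := by
    rw [← Finset.sum_subset (Finset.subset_univ ({i, j, k, l} : Finset ι))]
    · rw [Finset.sum_insert (by simp [hij, hik, hil]), Finset.sum_insert (by simp [hjk, hjl]),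
        Finset.sum_pair hkl]
      simp [hij.symm, hik.symm, hjk.symm, hil.symm, hjl.symm, hkl.symm]
    · intro x _ hx; simp at hx; simp [hx]
  rw [hs] at h
  rw [← h]
  apply Finset.sum_congr rfl
  intro z _
  rw [← Finset.prod_subset (Finset.subset_univ ({i, j, k, l} : Finset ι))]
  · rw [Finset.prod_insert (by simp [hij, hik, hil]), Finset.prod_insert (by simp [hjk, hjl]),
        Finset.prod_pair hkl]
    simp [hij.symm, hik.symm, hjk.symm, hil.symm, hjl.symm, hkl.symm]
  · intro x _ hx; simp at hx; simp [hx]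

lemma mom_ij (b n : ℕ) (hn : Fintype.card ι = n + 1) {i j : ι} (hij : i ≠ j) :
    ∑ z ∈ Finset.piAntidiag (Finset.univ : Finset ι) b, ((z i : ℚ) * z j)
      = ((n + b).choose (n + 2) : ℚ) := by
  have := mom2 b n hn hij 1 1
  simpa using this

lemma mom_iij (b n : ℕ) (hn : Fintype.card ι = n + 1) {i j l : ι} (hij : i ≠ j) (hil : i ≠ l)
    (hjl : j ≠ l) :
    ∑ z ∈ Finset.piAntidiag (Finset.univ : Finset ι) b, ((z i : ℚ) ^ 2 * (z j * z l))
      = 2 * ((n + b).choose (n + 4) : ℚ) + ((n + b).choose (n + 3) : ℚ) := by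
  rw [← mom3 b n hn hij hil hjl 2 1 1, ← mom3 b n hn hij hil hjl 1 1 1, Finset.mul_sum,
    ← Finset.sum_add_distrib]
  apply Finset.sum_congr rfl
  intro z _
  rw [sq_choose]; simp only [Nat.choose_one_right]; ring

lemma mom_iijj (b n : ℕ) (hn : Fintype.card ι = n + 1) {i j : ι} (hij : i ≠ j) :
    ∑ z ∈ Finset.piAntidiag (Finset.univ : Finset ι) b, ((z i : ℚ) ^ 2 * (z j) ^ 2)
      = 4 * ((n + b).choose (n + 4) : ℚ) + 4 * ((n + b).choose (n + 3) : ℚ)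
        + ((n + b).choose (n + 2) : ℚ) := by
  have h22 := mom2 b n hn hij 2 2
  have h21 := mom2 b n hn hij 2 1
  have h12 := mom2 b n hn hij 1 2
  have h11 := mom2 b n hn hij 1 1
  norm_num only at h22 h21 h12 h11
  rw [← h22, ← h11]
  have : 4 * ((n + b).choose (n + 3) : ℚ) = 2 * ((n + b).choose (n + 3) : ℚ)
    + 2 * ((n + b).choose (n + 3) : ℚ) := by ring
  rw [this]
  nth_rw 1 [← h21]
  rw [← h12, Finset.mul_sum, Finset.mul_sum, Finset.mul_sum, ← Finset.sum_add_distrib,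
    ← Finset.sum_add_distrib, ← Finset.sum_add_distrib]
  apply Finset.sum_congr rfl
  intro z _
  rw [sq_choose, sq_choose]; ring

/-- Kronecker delta -/
def dl (i j : ι) : ℚ := if i = j then 1 else 0

lemma mom_all (b n : ℕ) (hn : Fintype.card ι = n + 1) {i j k l : ι} (hij : i ≠ j) (hkl : k ≠ l) :
    ∑ z ∈ Finset.piAntidiag (Finset.univ : Finset ι) b, ((z i : ℚ) * z j * (z k * z l))
      = ((n + b).choose (n + 4) : ℚ)
        + (((n + b).choose (n + 4) : ℚ) + ((n + b).choose (n + 3) : ℚ))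
          * (dl i k + dl i l + dl j k + dl j l)
        + (((n + b).choose (n + 4) : ℚ) + 2 * ((n + b).choose (n + 3) : ℚ)
          + ((n + b).choose (n + 2) : ℚ)) * (dl i k * dl j l + dl i l * dl j k) := by
  unfold dl
  by_cases hik : i = k
  · subst hik
    by_cases hjl : j = l
    · subst hjl
      simp only [hij, hij.symm, if_true, if_false]
      have := mom_iijj b n hn hij
      rw [Finset.sum_congr rfl (g := fun z : ι → ℕ => ((z i : ℚ) ^ 2 * (z j) ^ 2))
        (fun z _ => by ring), this]
      ring
    · simp only [hij.symm, hkl, hjl, if_true, if_false]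
      rw [Finset.sum_congr rfl (g := fun z : ι → ℕ => ((z i : ℚ) ^ 2 * (z j * z l)))
        (fun z _ => by ring), mom_iij b n hn hij hkl hjl]
      ring
  · by_cases hil : i = l
    · subst hil
      by_cases hjk : j = k
      · subst hjk
        simp only [hij, hij.symm, if_true, if_false]
        have := mom_iijj b n hn hij
        rw [Finset.sum_congr rfl (g := fun z : ι → ℕ => ((z i : ℚ) ^ 2 * (z j) ^ 2))
          (fun z _ => by ring), this]
        ring
      · simp only [hik, hij.symm, hjk, if_true, if_false]
        rw [Finset.sum_congr rfl (g := fun z : ι → ℕ => ((z i : ℚ) ^ 2 * (z j * z k)))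
          (fun z _ => by ring), mom_iij b n hn hij hik hjk]
        ring
    · by_cases hjk : j = k
      · subst hjk
        simp only [hik, hil, hkl, if_true, if_false]
        rw [Finset.sum_congr rfl (g := fun z : ι → ℕ => ((z j : ℚ) ^ 2 * (z i * z l)))
          (fun z _ => by ring), mom_iij b n hn hij.symm hkl hil]
        ring
      · by_cases hjl : j = l
        · subst hjl
          simp only [hik, hil, hjk, if_true, if_false]
          rw [Finset.sum_congr rfl (g := fun z : ι → ℕ => ((z j : ℚ) ^ 2 * (z i * z k)))
            (fun z _ => by ring), mom_iij b n hn hij.symm hjk hik]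
          ring
        · simp only [hik, hil, hjk, hjl, if_false]
          rw [Finset.sum_congr rfl (g := fun z : ι → ℕ => ((z i : ℚ) * (z j * (z k * z l))))
            (fun z _ => by ring), mom4 b n hn hij hik hil hjk hjl hkl]
          ring

lemma sum_H (b n : ℕ) (hn : Fintype.card ι = n + 1) (W : ι → ι → ℚ) (hW : ∀ i, W i i = 0)
    (ρ : ℚ) (hρ : ∀ i, ∑ j, W i j = ρ) :
    ∑ z ∈ Finset.piAntidiag (Finset.univ : Finset ι) b, ∑ i, ∑ j, W i j * ((z i : ℚ) * z j)
      = ((n + b).choose (n + 2) : ℚ) * ((n + 1) * ρ) := by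
  rw [Finset.sum_comm]
  have h1 : ∀ i, ∑ z ∈ Finset.piAntidiag (Finset.univ : Finset ι) b,
      ∑ j, W i j * ((z i : ℚ) * z j) = ((n + b).choose (n + 2) : ℚ) * ρ := by
    intro i
    rw [Finset.sum_comm, ← hρ i, Finset.mul_sum]
    apply Finset.sum_congr rfl
    intro j _
    rw [← Finset.mul_sum]
    by_cases hij : i = j
    · subst hij; simp [hW]
    · rw [mom_ij b n hn hij]; ring
  rw [Finset.sum_congr rfl fun i _ => h1 i]
  simp [hn]; ring

lemma sum_H2 (b n : ℕ) (hn : Fintype.card ι = n + 1) (W : ι → ι → ℚ) (hW : ∀ i, W i i = 0)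
    (hsym : ∀ i j, W i j = W j i)
    (ρ σ : ℚ) (hρ : ∀ i, ∑ j, W i j = ρ) (hσ : ∀ i, ∑ j, W i j ^ 2 = σ) :
    ∑ z ∈ Finset.piAntidiag (Finset.univ : Finset ι) b,
      (∑ i, ∑ j, W i j * ((z i : ℚ) * z j)) ^ 2
      = ((n + b).choose (n + 4) : ℚ) * ((n + 1) * ρ) ^ 2
        + (((n + b).choose (n + 4) : ℚ) + ((n + b).choose (n + 3) : ℚ)) * (4 * ((n + 1) * ρ ^ 2))
        + (((n + b).choose (n + 4) : ℚ) + 2 * ((n + b).choose (n + 3) : ℚ)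
          + ((n + b).choose (n + 2) : ℚ)) * (2 * ((n + 1) * σ)) := by
  set C4 := ((n + b).choose (n + 4) : ℚ)
  set C3 := ((n + b).choose (n + 3) : ℚ)
  set C2 := ((n + b).choose (n + 2) : ℚ)
  have hexp : ∀ z : ι → ℕ, (∑ i, ∑ j, W i j * ((z i : ℚ) * z j)) ^ 2
      = ∑ i, ∑ j, ∑ k, ∑ l, W i j * W k l * ((z i : ℚ) * z j * (z k * z l)) := by
    intro z
    rw [sq, Finset.sum_mul]
    apply Finset.sum_congr rfl; intro i _
    rw [Finset.sum_mul]
    apply Finset.sum_congr rfl; intro j _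
    rw [Finset.mul_sum]
    apply Finset.sum_congr rfl; intro k _
    rw [Finset.mul_sum]
    apply Finset.sum_congr rfl; intro l _
    ring
  have hswap : ∑ z ∈ Finset.piAntidiag (Finset.univ : Finset ι) b,
      (∑ i, ∑ j, W i j * ((z i : ℚ) * z j)) ^ 2
      = ∑ i, ∑ j, ∑ k, ∑ l, W i j * W k l *
        (C4 + (C4 + C3) * (dl i k + dl i l + dl j k + dl j l)
          + (C4 + 2 * C3 + C2) * (dl i k * dl j l + dl i l * dl j k)) := by
    rw [Finset.sum_congr rfl fun z _ => hexp z, Finset.sum_comm]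
    apply Finset.sum_congr rfl; intro i _
    rw [Finset.sum_comm]
    apply Finset.sum_congr rfl; intro j _
    rw [Finset.sum_comm]
    apply Finset.sum_congr rfl; intro k _
    rw [Finset.sum_comm]
    apply Finset.sum_congr rfl; intro l _
    rw [← Finset.mul_sum]
    by_cases hij : i = j
    · subst hij; simp [hW]
    by_cases hkl : k = l
    · subst hkl; simp [hW]
    rw [mom_all b n hn hij hkl]
  have hρ' : ∀ j, ∑ i, W i j = ρ := fun j => by
    rw [← hρ j]; exact Finset.sum_congr rfl fun i _ => hsym i j
  -- inner sums over l, then k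
  have hl : ∀ i j k, ∑ l, W i j * W k l *
        (C4 + (C4 + C3) * (dl i k + dl i l + dl j k + dl j l)
          + (C4 + 2 * C3 + C2) * (dl i k * dl j l + dl i l * dl j k))
      = W i j * (C4 * ρ + (C4 + C3) * (ρ * dl i k + W k i + ρ * dl j k + W k j)
          + (C4 + 2 * C3 + C2) * (dl i k * W k j + dl j k * W k i)) := by
    intro i j k
    have : ∀ x, ∑ l, W k l * dl x l = W k x := by intro x; simp [dl]
    rw [← this i, ← this j, ← hρ k]
    simp only [Finset.mul_sum, Finset.sum_mul, ← Finset.sum_add_distrib]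
    apply Finset.sum_congr rfl; intro l _
    ring
  have hk : ∀ i j, ∑ k, W i j * (C4 * ρ + (C4 + C3) * (ρ * dl i k + W k i + ρ * dl j k + W k j)
          + (C4 + 2 * C3 + C2) * (dl i k * W k j + dl j k * W k i))
      = W i j * (C4 * ((n + 1) * ρ) + (C4 + C3) * (4 * ρ)) + (C4 + 2 * C3 + C2) * (2 * W i j ^ 2) := by
    intro i j
    have d1 : ∀ x : ι, ∑ k, dl x k = 1 := by intro x; simp [dl]
    have d2 : ∀ x y : ι, ∑ k, dl x k * W k y = W x y := by intro x y; simp [dl]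
    rw [← Finset.mul_sum]
    simp only [Finset.sum_add_distrib, ← Finset.mul_sum, d1, d2, hρ']
    rw [Finset.sum_const, Finset.card_univ, hn, hsym j i]
    simp only [nsmul_eq_mul]
    push_cast
    ring
  rw [hswap]
  simp only [hl, hk]
  simp only [Finset.sum_add_distrib, ← Finset.mul_sum, ← Finset.sum_mul, hρ, hσ]
  simp only [Finset.sum_const, Finset.card_univ, hn, nsmul_eq_mul]
  push_cast
  ring
end Moments

lemma choose_step (m k : ℕ) :
    (m.choose (k + 1) : ℚ) * (k + 1) = (m.choose k : ℚ) * ((m : ℚ) - k) := by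
  have h := Nat.choose_succ_right_eq m k
  have h' : (m.choose (k + 1) : ℚ) * (k + 1) = (m.choose k : ℚ) * ((m - k : ℕ) : ℚ) := by
    exact_mod_cast h
  rw [h']
  rcases le_or_gt k m with hk | hk
  · rw [Nat.cast_sub hk]
  · rw [Nat.choose_eq_zero_of_lt hk]; simp

lemma final_sum (n b : ℕ) :
    ∑ z ∈ Comp (n + 1) b, ((((n + 1 : ℕ) : ℚ) ^ 2 - 1) * ((b : ℚ) ^ 2 - 1) / 24 - HH (n + 1) z / 4
      - (n : ℚ) * ((b : ℚ) - 1) * ((n : ℚ) + b + 2) / 24) ^ 2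
      = ((n + b).choose b : ℚ) *
          (((n : ℚ) + 1) * n * b * ((b : ℚ) - 1) * ((n : ℚ) + 1 + b) * ((n : ℚ) + b + 2)
            / 1440) := by
  have hn : Fintype.card (ZMod (n + 1)) = n + 1 := ZMod.card (n + 1)
  have hρ : ∀ i : ZMod (n + 1), ∑ j, ww (n + 1) (i - j)
      = ((n + 1 : ℕ) : ℚ) * (((n + 1 : ℕ) : ℚ) ^ 2 - 1) / 6 := fun i => by
    rw [sum_sub_left (ww (n + 1)), ww_sum]
  have hσ : ∀ i : ZMod (n + 1), ∑ j, ww (n + 1) (i - j) ^ 2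
      = ((n + 1 : ℕ) : ℚ) * (((n + 1 : ℕ) : ℚ) ^ 4 - 1) / 30 := fun i => by
    rw [sum_sub_left (fun c => ww (n + 1) c ^ 2), ww_sum_sq]
  have hW : ∀ i : ZMod (n + 1), ww (n + 1) (i - i) = 0 := fun i => by simp [ww]
  have hsym : ∀ i j : ZMod (n + 1), ww (n + 1) (i - j) = ww (n + 1) (j - i) := fun i j => by
    rw [← ww_neg, neg_sub]
  have h0 : ∑ z ∈ Comp (n + 1) b, (1 : ℚ) = ((n + b).choose n : ℚ) := by
    have := fact_moment (ι := ZMod (n + 1)) b n hn (fun _ => 0)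
    simpa [Comp] using this
  have h1 : ∑ z ∈ Comp (n + 1) b, HH (n + 1) z = _ :=
    sum_H b n hn (fun i j => ww (n + 1) (i - j)) hW _ hρ
  have h2 : ∑ z ∈ Comp (n + 1) b, HH (n + 1) z ^ 2 = _ :=
    sum_H2 b n hn (fun i j => ww (n + 1) (i - j)) hW hsym _ _ hρ hσ
  set D : ℚ := (((n + 1 : ℕ) : ℚ) ^ 2 - 1) * ((b : ℚ) ^ 2 - 1) / 24
    - (n : ℚ) * ((b : ℚ) - 1) * ((n : ℚ) + b + 2) / 24 with hD
  have hexp : ∀ z ∈ Comp (n + 1) b,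
      ((((n + 1 : ℕ) : ℚ) ^ 2 - 1) * ((b : ℚ) ^ 2 - 1) / 24 - HH (n + 1) z / 4
      - (n : ℚ) * ((b : ℚ) - 1) * ((n : ℚ) + b + 2) / 24) ^ 2
      = D ^ 2 * 1 - D / 2 * HH (n + 1) z + 1 / 16 * HH (n + 1) z ^ 2 := by
    intro z _; rw [hD]; ring
  rw [Finset.sum_congr rfl hexp, Finset.sum_add_distrib, Finset.sum_sub_distrib, ← Finset.mul_sum,
    ← Finset.mul_sum, ← Finset.mul_sum, h0, h1, h2, hD]
  have hsymm : (n + b).choose b = (n + b).choose n := by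
    rw [Nat.choose_symm_add]
  rw [hsymm]
  have c1 := choose_step (n + b) n
  have c2 := choose_step (n + b) (n + 1)
  have c3 := choose_step (n + b) (n + 2)
  have c4 := choose_step (n + b) (n + 3)
  push_cast at c1 c2 c3 c4 ⊢
  have n1 : (n : ℚ) + 1 ≠ 0 := by positivity
  have n2 : (n : ℚ) + 1 + 1 ≠ 0 := by positivity
  have n3 : (n : ℚ) + 2 + 1 ≠ 0 := by positivity
  have n4 : (n : ℚ) + 3 + 1 ≠ 0 := by positivity
  have n2' : (n : ℚ) + 2 ≠ 0 := by positivity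
  have n3' : (n : ℚ) + 3 ≠ 0 := by positivity
  have n4' : (n : ℚ) + 4 ≠ 0 := by positivity
  rw [← eq_div_iff n1] at c1
  rw [← eq_div_iff n2, c1] at c2
  rw [← eq_div_iff n3, c2] at c3
  rw [← eq_div_iff n4, c3] at c4
  rw [c4, c3, c2]
  generalize ((n + b).choose n : ℚ) = C
  have e2 : (n : ℚ) + 1 + 1 = n + 2 := by ring
  have e3 : (n : ℚ) + 2 + 1 = n + 3 := by ring
  have e4 : (n : ℚ) + 3 + 1 = n + 4 := by ring
  rw [e2, e3, e4]
  field_simp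
  ring

end SMC

/-- Second central moment of size over `(n+1,b)`-cores. -/
theorem second_moment_cores (n b : ℕ) (hn : 1 ≤ n) (hb : 0 < b)
    (h : Nat.Coprime (n + 1) b) :
    ∑ᶠ μ ∈ {μ : YoungDiagram | μ.IsCore (n + 1) ∧ μ.IsCore b},
        ((μ.card : ℚ) - (n : ℚ) * ((b : ℚ) - 1) * ((n : ℚ) + b + 2) / 24) ^ 2
      = (1 / ((n : ℚ) + 1)) * ((n + b).choose b : ℚ) *
          (((n : ℚ) + 1) * n * b * ((b : ℚ) - 1) * ((n : ℚ) + 1 + b) * ((n : ℚ) + b + 2)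
            / 1440) := by
  rw [SMC.finsum_cores (n + 1) b (Nat.succ_pos n) hb
    (fun x => (x - (n : ℚ) * ((b : ℚ) - 1) * ((n : ℚ) + b + 2) / 24) ^ 2)]
  have h1 := SMC.finsum_XX (a := n + 1) (b := b) h
    (fun X => (SMC.size X - (n : ℚ) * ((b : ℚ) - 1) * ((n : ℚ) + b + 2) / 24) ^ 2)
    (fun z => ((((n + 1 : ℕ) : ℚ) ^ 2 - 1) * ((b : ℚ) ^ 2 - 1) / 24 - SMC.HH (n + 1) z / 4
      - (n : ℚ) * ((b : ℚ) - 1) * ((n : ℚ) + b + 2) / 24) ^ 2)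
    (fun X hX r => by rw [SMC.size_eq h hX r])
  rw [SMC.final_sum] at h1
  have hn0 : (n : ℚ) + 1 ≠ 0 := by positivity
  push_cast at h1
  rw [mul_assoc (1 / ((n : ℚ) + 1)), ← h1]
  rw [one_div, inv_mul_cancel_left₀ hn0]
end
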